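/- For all integers n ≥ 2 and 1 ≤ r ≤ n, one has 2^r · r! · S_D(n,r) = Σ_{k=0}^{r} A_D(n,k) · C(n−k, r−k) + n · 2^{n−1} · (r−1)! · S(n−1, r−1), where C(a,b) denotes the binomial coefficient. -/

import Mathlib

open Classical Finset

/-! ### Signed permutations (type B), window notation -/

/-- `w` is the window notation of a signed permutation of `{1,…,n}`. -/
def IsSignedPerm {n : ℕ} (w : Fin n → ℤ) : Prop :=
  (∀ i, 1 ≤ |w i| ∧ |w i| ≤ (n : ℤ)) ∧ Function.Injective fun i => |w i|

/-- The value `β(i)` for `1 ≤ i ≤ n`, and `0` otherwise (so `β(0) = 0`). -/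
def bVal {n : ℕ} (w : Fin n → ℤ) (i : ℕ) : ℤ :=
  if h : 1 ≤ i ∧ i ≤ n then w ⟨i - 1, by omega⟩ else 0

/-- Type `B` descent number: `#{i ∈ {0,…,n−1} : β(i) > β(i+1)}`, with `β(0) = 0`. -/
noncomputable def desB {n : ℕ} (w : Fin n → ℤ) : ℕ :=
  ((Finset.range n).filter fun i => bVal w (i + 1) < bVal w i).card

/-- Type `B` Eulerian number `A_B(n,k)`. -/
noncomputable def EulB (n k : ℕ) : ℕ :=
  Nat.card { w : Fin n → ℤ // IsSignedPerm w ∧ desB w = k }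

/-- Type `D` descent number: as in type `B` but with the convention `γ(0) = −γ(2)`. -/
noncomputable def desD {n : ℕ} (w : Fin n → ℤ) : ℕ :=
  ((Finset.range n).filter fun i =>
    bVal w (i + 1) < (if i = 0 then -(bVal w 2) else bVal w i)).card

/-- `w` has an even number of negative entries. -/
def IsEvenSigned {n : ℕ} (w : Fin n → ℤ) : Prop :=
  Even ((Finset.univ.filter fun i => w i < 0)).card

/-- Type `D` Eulerian number `A_D(n,k)`. -/
noncomputable def EulD (n k : ℕ) : ℕ :=
  Nat.card { w : Fin n → ℤ // IsSignedPerm w ∧ IsEvenSigned w ∧ desD w = k }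

/-! ### Set partitions of types B and D -/

/-- The negative `−C` of a block `C`. -/
def negSet (C : Finset ℤ) : Finset ℤ := C.image fun x => -x

/-- A `Bₙ`-partition: a set partition of `{−n,…,−1,1,…,n}` such that at most one block
satisfies `C = −C` (the zero-block), and `−C` is a block whenever `C` is. -/
structure BPartition (n : ℕ) where
  blocks : Finset (Finset ℤ)
  cover : ∀ x : ℤ, (x ≠ 0 ∧ |x| ≤ (n : ℤ)) ↔ ∃ C ∈ blocks, x ∈ C
  nonempty : ∀ C ∈ blocks, C.Nonempty
  disj : ∀ C ∈ blocks, ∀ C' ∈ blocks, C ≠ C' → Disjoint C C'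
  closed : ∀ C ∈ blocks, negSet C ∈ blocks
  zeroUnique : ∀ C ∈ blocks, ∀ C' ∈ blocks, negSet C = C → negSet C' = C' → C = C'

/-- A `Dₙ`-partition: a `Bₙ`-partition whose zero-block, if present, has at least
two positive elements. -/
def IsDPartition {n : ℕ} (P : BPartition n) : Prop :=
  ∀ C ∈ P.blocks, negSet C = C → 2 ≤ (C.filter fun x => 0 < x).card

/-- `P` has exactly `r` pairs `{C, −C}` of nonzero blocks. -/
def hasPairs {n : ℕ} (P : BPartition n) (r : ℕ) : Prop :=
  (P.blocks.filter fun C => negSet C ≠ C).card = 2 * r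

/-- Stirling number of the second kind of type `B`. -/
noncomputable def SB (n r : ℕ) : ℕ :=
  Nat.card { P : BPartition n // hasPairs P r }

/-- Stirling number of the second kind of type `D`. -/
noncomputable def SD (n r : ℕ) : ℕ :=
  Nat.card { P : BPartition n // IsDPartition P ∧ hasPairs P r }

/-- An ordered `Bₙ`-partition: a `Bₙ`-partition with a linear order on its blocks in
which the zero-block (if present) comes first and `C, −C` are always adjacent. -/
structure OrderedBPartition (n : ℕ) where
  P : BPartition n
  order : List (Finset ℤ)
  nodup : order.Nodup
  same : order.toFinset = P.blocks
  zeroFirst : ∀ C ∈ P.blocks, negSet C = C → order[0]? = some C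
  adjacent : ∀ C ∈ P.blocks, negSet C ≠ C →
    ∃ i : ℕ, (order[i]? = some C ∧ order[i+1]? = some (negSet C)) ∨
             (order[i]? = some (negSet C) ∧ order[i+1]? = some C)

/-! ### Classical Stirling and Eulerian numbers -/

/-- The classical Stirling number of the second kind `S(n,r)`. -/
noncomputable def Stir (n r : ℕ) : ℕ :=
  Nat.card { P : Finpartition (Finset.univ : Finset (Fin n)) // P.parts.card = r }

/-- Number of descents of a permutation of `{1,…,n}`. -/
noncomputable def desA {n : ℕ} (σ : Equiv.Perm (Fin n)) : ℕ :=
  ((Finset.range (n - 1)).filter fun i =>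
    ∃ h : i + 1 < n, σ ⟨i + 1, h⟩ < σ ⟨i, Nat.lt_of_succ_lt h⟩).card

/-- The classical Eulerian number `A(n,k)`: permutations with `k−1` descents
(and `A(n,0) = 0`). -/
noncomputable def EulA (n k : ℕ) : ℕ :=
  if k = 0 then 0 else Nat.card { σ : Equiv.Perm (Fin n) // desA σ = k - 1 }

/-! ### Colored permutations -/

/-- `π` is (the window notation of) a colored permutation in `G_{m,n}`. -/
def IsColoredPerm {m n : ℕ} (π : Fin n → Fin n × ZMod m) : Prop :=
  Function.Bijective fun i => (π i).1

/-- The color order `a ≺ b` on the colored alphabet. -/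
def colorLt {m n : ℕ} (a b : Fin n × ZMod m) : Prop :=
  b.2.val < a.2.val ∨ (a.2 = b.2 ∧ a.1 < b.1)

/-- The descent number `des_G` of a colored permutation. -/
noncomputable def desG {m n : ℕ} (π : Fin n → Fin n × ZMod m) : ℕ :=
  ((Finset.range (n - 1)).filter fun i =>
    ∃ h : i + 1 < n, colorLt (π ⟨i + 1, h⟩) (π ⟨i, Nat.lt_of_succ_lt h⟩)).card
  + (if h : 0 < n then (if (π ⟨0, h⟩).2 ≠ 0 then 1 else 0) else 0)

/-- The Eulerian number `A_m(n,k)` of `G_{m,n}`. -/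
noncomputable def EulG (m n k : ℕ) : ℕ :=
  Nat.card { π : Fin n → Fin n × ZMod m // IsColoredPerm π ∧ desG π = k }

/-- The shift `C^{[t]}` of a block of the colored alphabet. -/
def shiftBlock {m n : ℕ} (t : ZMod m) (C : Finset (Fin n × ZMod m)) :
    Finset (Fin n × ZMod m) :=
  C.image fun p => (p.1, p.2 + t)

/-- A `G_{m,n}`-partition. -/
structure GPartition (m n : ℕ) where
  blocks : Finset (Finset (Fin n × ZMod m))
  cover : ∀ x : Fin n × ZMod m, ∃ C ∈ blocks, x ∈ C
  nonempty : ∀ C ∈ blocks, C.Nonempty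
  disj : ∀ C ∈ blocks, ∀ C' ∈ blocks, C ≠ C' → Disjoint C C'
  closed : ∀ C ∈ blocks, shiftBlock 1 C ∈ blocks
  zeroUnique : ∀ C ∈ blocks, ∀ C' ∈ blocks,
    shiftBlock 1 C = C → shiftBlock 1 C' = C' → C = C'

/-- The number of equivalence classes (orbits under shifting) of nonzero blocks. -/
noncomputable def numClasses {m n : ℕ} (P : GPartition m n) : ℕ :=
  ((P.blocks.filter fun C => shiftBlock 1 C ≠ C).image
    fun C => (Finset.range m).image fun t => shiftBlock (t : ZMod m) C).card

/-- Stirling number of the second kind `S_m(n,r)` for `G_{m,n}`. -/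
noncomputable def SG (m n r : ℕ) : ℕ :=
  Nat.card { P : GPartition m n // numClasses P = r }

/-- An ordered `G_{m,n}`-partition. -/
structure OrderedGPartition (m n : ℕ) where
  P : GPartition m n
  order : List (Finset (Fin n × ZMod m))
  nodup : order.Nodup
  same : order.toFinset = P.blocks
  zeroFirst : ∀ C ∈ P.blocks, shiftBlock 1 C = C → order[0]? = some C
  consec : ∀ C ∈ P.blocks, shiftBlock 1 C ≠ C →
    ∃ i : ℕ, ∃ s : ZMod m, ∀ t : ℕ, t < m →
      order[i + t]? = some (shiftBlock (s + (t : ZMod m)) C)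

/-!
Call `f : {1,…,n} → {-r,…,r}` a level function if `|f|` attains each of the levels `1,…,r`.
The fibres of the odd extension of `f` form a `Bₙ`-partition with `r` pairs of nonzero blocks, and
each such partition arises from `2 ^ r * r!` level functions, which differ by signed permutations
of the levels. It is a `Dₙ`-partition when `f` does not vanish exactly once.

Listing the ground set by increasing level, and by increasing value within a level, turns `f` into
a signed permutation `w` and an `r`-subset `S` of `{0,…,n-1}`, the positions at which the level
goes up; the only constraint is that `S` contains the type `B` descents of `w`. Here `f` vanishes
exactly once if and only if `0 ∉ S` and `1 ∈ S`. So, with `B(S)` and `D(S)` the numbers of signed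
permutations whose type `B`, respectively type `D`, descents lie in `S`, the left hand side is the
sum of `B(S)` over all other `S`, while twice the Eulerian sum is the sum of `D(S)` over all `S`.

Changing the sign of the first entry exchanges `0` and `1` in type `D` descent sets. Hence
`D(S) = B(S)` if `0 ∈ S`, `D(S) = D(S')` for `S'` obtained from `S` by exchanging `0` and `1`, and
`D(S) = 2 * B(S)` if `0, 1 ∉ S`. Therefore twice the first sum exceeds the second by the sum of
`B(S)` over the `S` containing `0` and `1`, that is, by the number of level functions without zeros
for which level `1` is attained exactly once, and these are counted by `S(n-1, r-1)`.
-/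

/-! ### Odd functions and level functions -/

/-- The ground set `{-n,…,-1,1,…,n}` of signed permutations and of `Bₙ`-partitions. -/
noncomputable def signedRange (n : ℕ) : Finset ℤ := (Icc (-(n : ℤ)) n).erase 0

lemma mem_signedRange {n : ℕ} {x : ℤ} : x ∈ signedRange n ↔ x ≠ 0 ∧ x.natAbs ≤ n := by
  rw [signedRange, mem_erase, mem_Icc]
  omega

lemma neg_mem_signedRange {n : ℕ} {x : ℤ} : -x ∈ signedRange n ↔ x ∈ signedRange n := by
  simp only [mem_signedRange, neg_ne_zero, Int.natAbs_neg]

lemma card_signedRange (n : ℕ) : #(signedRange n) = 2 * n := by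
  rw [signedRange, card_erase_of_mem (by simp), Int.card_Icc]
  omega

lemma succ_mem_signedRange {n : ℕ} (j : Fin n) : (j : ℤ) + 1 ∈ signedRange n :=
  mem_signedRange.2 (by omega)

lemma exists_eq_succ_or_eq_neg_succ {n : ℕ} {x : ℤ} (hx : x ∈ signedRange n) :
    ∃ j : Fin n, x = (j : ℤ) + 1 ∨ x = -((j : ℤ) + 1) := by
  obtain ⟨h0, hn⟩ := mem_signedRange.1 hx
  exact ⟨⟨x.natAbs - 1, by omega⟩, by simp only; omega⟩

lemma bVal_zero {n : ℕ} (w : Fin n → ℤ) : bVal w 0 = 0 := by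
  simp [bVal]

lemma bVal_succ {n : ℕ} (w : Fin n → ℤ) (i : Fin n) : bVal w (i + 1) = w i := by
  simp [bVal]

/-- The odd function on `{-n,…,n}` with window `f`, that is, with value `f j` at the
(one-based) position of `j`. For the window of a signed permutation `β` it is `β` itself. -/
def oddExt {n : ℕ} (f : Fin n → ℤ) (x : ℤ) : ℤ := x.sign * bVal f x.natAbs

lemma oddExt_neg {n : ℕ} (f : Fin n → ℤ) (x : ℤ) : oddExt f (-x) = -oddExt f x := by
  simp [oddExt]

lemma oddExt_zero {n : ℕ} (f : Fin n → ℤ) : oddExt f 0 = 0 := by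
  simp [oddExt]

lemma oddExt_succ {n : ℕ} (f : Fin n → ℤ) (j : Fin n) : oddExt f ((j : ℤ) + 1) = f j := by
  have hsign : ((j : ℤ) + 1).sign = 1 := Int.sign_eq_one_of_pos (by omega)
  have habs : ((j : ℤ) + 1).natAbs = j + 1 := by omega
  rw [oddExt, hsign, habs, bVal_succ, one_mul]

lemma oddExt_natAbs {n : ℕ} (f : Fin n → ℤ) {x : ℤ} {j : Fin n} (hx : x.natAbs = j + 1) :
    (oddExt f x).natAbs = (f j).natAbs := by
  obtain rfl | rfl : x = (j : ℤ) + 1 ∨ x = -((j : ℤ) + 1) := by omega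
  · rw [oddExt_succ]
  · rw [oddExt_neg, oddExt_succ, Int.natAbs_neg]

lemma oddExt_eq_of_odd {n : ℕ} {f : Fin n → ℤ} {φ : ℤ → ℤ}
    (hodd : ∀ x ∈ signedRange n, φ (-x) = -φ x) (hf : ∀ j : Fin n, φ ((j : ℤ) + 1) = f j)
    {x : ℤ} (hx : x ∈ signedRange n) : oddExt f x = φ x := by
  obtain ⟨j, rfl | rfl⟩ := exists_eq_succ_or_eq_neg_succ hx
  · rw [oddExt_succ, hf]
  · rw [oddExt_neg, oddExt_succ, hodd _ (succ_mem_signedRange j), hf]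

/-- The functions `f` with values in `{-r,…,r}` whose absolute values hit every level
`1,…,r`; a level function encodes a `Bₙ`-partition together with an ordering and signing of
its `r` pairs of nonzero blocks. -/
noncomputable def levelFunctions (n r : ℕ) : Finset (Fin n → ℤ) :=
  (Fintype.piFinset fun _ => Icc (-(r : ℤ)) r).filter fun f =>
    ∀ v ∈ signedRange r, ∃ j, (f j).natAbs = v.natAbs

lemma mem_levelFunctions {n r : ℕ} {f : Fin n → ℤ} :
    f ∈ levelFunctions n r ↔
      (∀ j, (f j).natAbs ≤ r) ∧ ∀ v ∈ signedRange r, ∃ j, (f j).natAbs = v.natAbs := by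
  rw [levelFunctions, mem_filter, Fintype.mem_piFinset]
  simp only [mem_Icc]
  exact and_congr_left' (forall_congr' fun j => by omega)

lemma exists_oddExt_eq {n r : ℕ} {f : Fin n → ℤ} (hf : f ∈ levelFunctions n r) {v : ℤ}
    (hv : v ∈ signedRange r) : ∃ x ∈ signedRange n, oddExt f x = v := by
  obtain ⟨j, hj⟩ := (mem_levelFunctions.1 hf).2 v hv
  have hpos := succ_mem_signedRange j
  rcases Int.natAbs_eq_natAbs_iff.1 hj with h | h
  · exact ⟨_, hpos, by rw [oddExt_succ, h]⟩
  · exact ⟨_, neg_mem_signedRange.2 hpos, by rw [oddExt_neg, oddExt_succ, h, neg_neg]⟩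

lemma natAbs_oddExt_le {n r : ℕ} {f : Fin n → ℤ} (hf : f ∈ levelFunctions n r) {x : ℤ}
    (hx : x ∈ signedRange n) : (oddExt f x).natAbs ≤ r := by
  obtain ⟨j, hj⟩ := exists_eq_succ_or_eq_neg_succ hx
  rw [oddExt_natAbs f (j := j) (by omega)]
  exact (mem_levelFunctions.1 hf).1 j

lemma isSignedPerm_iff {n : ℕ} {w : Fin n → ℤ} :
    IsSignedPerm w ↔ (∀ i, w i ∈ signedRange n) ∧ Function.Injective fun i => (w i).natAbs := by
  simp only [IsSignedPerm, mem_signedRange, Function.Injective, Int.abs_eq_natAbs, Nat.cast_inj]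
  exact and_congr_left' (forall_congr' fun i => by omega)

/-- The windows of the signed permutations of `{1,…,n}`. -/
noncomputable def signedPerms (n : ℕ) : Finset (Fin n → ℤ) :=
  (Fintype.piFinset fun _ => signedRange n).filter fun w =>
    Function.Injective fun i => (w i).natAbs

lemma mem_signedPerms {n : ℕ} {w : Fin n → ℤ} : w ∈ signedPerms n ↔ IsSignedPerm w := by
  rw [signedPerms, mem_filter, Fintype.mem_piFinset, isSignedPerm_iff]

lemma exists_perm_natAbs_eq {n : ℕ} {w : Fin n → ℤ} (hw : IsSignedPerm w) :
    ∃ σ : Equiv.Perm (Fin n), ∀ i, (w i).natAbs = σ i + 1 := by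
  obtain ⟨hrange, hinj⟩ := isSignedPerm_iff.1 hw
  choose σ hσ using fun i => exists_eq_succ_or_eq_neg_succ (hrange i)
  have habs (i) : (w i).natAbs = σ i + 1 := by
    have := hσ i
    omega
  have hσinj : Function.Injective σ := fun i i' h => hinj (by simp only [habs, h])
  exact ⟨Equiv.ofBijective σ (Finite.injective_iff_bijective.1 hσinj), habs⟩

/-- The function with signs `ε` and with absolute values the levels `h`, where
level `l ∈ {1,…,r}` is represented by `l - 1 : Fin r`. -/
def signedLift {n r : ℕ} (ε : Fin n → ℤˣ) (h : Fin n → Fin r) (j : Fin n) : ℤ :=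
  ε j * ((h j : ℤ) + 1)

lemma natAbs_signedLift {n r : ℕ} (ε : Fin n → ℤˣ) (h : Fin n → Fin r) (j : Fin n) :
    (signedLift ε h j).natAbs = h j + 1 := by
  rw [signedLift, Int.natAbs_mul, Int.units_natAbs, one_mul]
  omega

lemma signedLift_mem_signedRange {n r : ℕ} (ε : Fin n → ℤˣ) (h : Fin n → Fin r) (j : Fin n) :
    signedLift ε h j ∈ signedRange r := by
  have := natAbs_signedLift ε h j
  exact mem_signedRange.2 (by omega)

lemma signedLift_injective {n r : ℕ} :
    Function.Injective fun x : (Fin n → ℤˣ) × (Fin n → Fin r) => signedLift x.1 x.2 := by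
  rintro ⟨ε, h⟩ ⟨ε', h'⟩ heq
  have hh : h = h' := funext fun j => by
    have := congrArg Int.natAbs (congrFun heq j)
    simp only [natAbs_signedLift] at this
    omega
  subst hh
  refine Prod.ext (funext fun j => Units.ext ?_) rfl
  exact mul_right_cancel₀ (by omega : (h j : ℤ) + 1 ≠ 0) (congrFun heq j)

lemma exists_signedLift_eq {n r : ℕ} {f : Fin n → ℤ} (hf : ∀ j, f j ∈ signedRange r) :
    ∃ (ε : Fin n → ℤˣ) (h : Fin n → Fin r), signedLift ε h = f := by
  choose h hh using fun j => exists_eq_succ_or_eq_neg_succ (hf j)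
  refine ⟨fun j => if f j = (h j : ℤ) + 1 then 1 else -1, h, funext fun j => ?_⟩
  rcases hh j with h | h <;> simp only [signedLift] <;> split_ifs <;> simp_all

/-- Functions into `{-r,…,-1,1,…,r}` are pairs of a sign vector and a function into `Fin r`. -/
lemma card_filter_eq_two_pow_mul {n r : ℕ} {s : Finset (Fin n → ℤ)}
    {p : (Fin n → Fin r) → Prop} [DecidablePred p]
    (hs : ∀ f ∈ s, ∀ j, f j ∈ signedRange r) (hp : ∀ ε h, signedLift ε h ∈ s ↔ p h) :
    #s = 2 ^ n * #{h | p h} := by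
  have himage : s = (univ ×ˢ ({h | p h} : Finset _)).image fun x => signedLift x.1 x.2 := by
    ext f
    simp only [mem_image, mem_product, mem_univ, true_and, mem_filter, Prod.exists]
    constructor
    · intro hf
      obtain ⟨ε, h, rfl⟩ := exists_signedLift_eq (hs f hf)
      exact ⟨ε, h, (hp ε h).1 hf, rfl⟩
    · rintro ⟨ε, h, hh, rfl⟩
      exact (hp ε h).2 hh
  rw [himage, card_image_of_injective _ signedLift_injective, card_product, card_univ,
    Fintype.card_fun, Fintype.card_units_int, Fintype.card_fin]

lemma signedLift_mem_levelFunctions {n r : ℕ} {ε : Fin n → ℤˣ} {h : Fin n → Fin r} :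
    signedLift ε h ∈ levelFunctions n r ↔ Function.Surjective h := by
  simp only [mem_levelFunctions, natAbs_signedLift, Function.Surjective]
  refine ⟨fun hf l => ?_, fun hh => ⟨fun j => by omega, fun v hv => ?_⟩⟩
  · obtain ⟨j, hj⟩ := hf.2 _ (succ_mem_signedRange l)
    exact ⟨j, by omega⟩
  · obtain ⟨l, hl⟩ := exists_eq_succ_or_eq_neg_succ hv
    obtain ⟨j, rfl⟩ := hh l
    exact ⟨j, by omega⟩

lemma card_signedPerms (n : ℕ) : #(signedPerms n) = 2 ^ n * n.factorial := by
  have hlift : ∀ (ε : Fin n → ℤˣ) (h : Fin n → Fin n),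
      signedLift ε h ∈ signedPerms n ↔ Function.Injective h := by
    intro ε h
    simp only [mem_signedPerms, isSignedPerm_iff, signedLift_mem_signedRange, natAbs_signedLift,
      implies_true, true_and, Function.Injective, add_left_inj, Fin.val_inj]
  rw [card_filter_eq_two_pow_mul
      (fun w hw => (isSignedPerm_iff.1 (mem_signedPerms.1 hw)).1) hlift,
    ← Fintype.card_subtype, Fintype.card_congr (Equiv.subtypeInjectiveEquivEmbedding _ _),
    Fintype.card_embedding_eq, Fintype.card_fin, Nat.descFactorial_self]

/-! ### Surjections and Stirling numbers -/

section Surjections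

variable {α : Type*} [Fintype α] [DecidableEq α] {s : ℕ}

lemma finpartition_eq_of_part_eq_part_iff {P Q : Finpartition (univ : Finset α)}
    (h : ∀ a b, P.part a = P.part b ↔ Q.part a = Q.part b) : P = Q := by
  have hpart : P.part = Q.part := by
    ext a b
    rw [P.mem_part_iff_part_eq_part (mem_univ _) (mem_univ _),
      Q.mem_part_iff_part_eq_part (mem_univ _) (mem_univ _), h]
  have hparts (R : Finpartition (univ : Finset α)) : R.parts = univ.image R.part := by
    ext t
    refine ⟨fun ht => ?_, fun ht => ?_⟩
    · obtain ⟨a, ha, rfl⟩ := R.part_surjOn ht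
      exact mem_image_of_mem _ ha
    · obtain ⟨a, ha, rfl⟩ := mem_image.1 ht
      exact R.part_mem.2 ha
  exact Finpartition.ext (by rw [hparts, hparts, hpart])

variable (α s) in
/-- The set partitions of `α` whose parts are labelled by `Fin s`. -/
abbrev LabelledPartition : Type _ :=
  Σ P : {P : Finpartition (univ : Finset α) // #P.parts = s}, (P.1.parts ≃ Fin s)

/-- The function sending each element to the label of its part. Every surjection onto `Fin s`
arises in this way from exactly one labelled partition. -/
def partLabel (x : LabelledPartition α s) (a : α) : Fin s :=
  x.2 ⟨x.1.1.part a, x.1.1.part_mem.2 (mem_univ a)⟩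

lemma partLabel_eq_partLabel_iff {x : LabelledPartition α s} {a b : α} :
    partLabel x a = partLabel x b ↔ x.1.1.part a = x.1.1.part b := by
  rw [partLabel, partLabel, x.2.apply_eq_iff_eq, Subtype.mk_eq_mk]

lemma partLabel_surjective (x : LabelledPartition α s) : Function.Surjective (partLabel x) := by
  intro l
  obtain ⟨a, -, ha⟩ := x.1.1.part_surjOn (x.2.symm l).2
  exact ⟨a, by simp only [partLabel, ha, Subtype.coe_eta, Equiv.apply_symm_apply]⟩

lemma partLabel_injective : Function.Injective (partLabel (α := α) (s := s)) := by
  rintro ⟨⟨P, hP⟩, e⟩ ⟨⟨Q, hQ⟩, e'⟩ h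
  obtain rfl : P = Q := finpartition_eq_of_part_eq_part_iff fun a b =>
    (partLabel_eq_partLabel_iff (x := ⟨⟨P, hP⟩, e⟩)).symm.trans
      (h ▸ partLabel_eq_partLabel_iff (x := ⟨⟨Q, hQ⟩, e'⟩))
  obtain rfl : e = e' := by
    ext ⟨t, ht⟩
    obtain ⟨a, -, rfl⟩ := P.part_surjOn ht
    exact congrArg Fin.val (congrFun h a)
  rfl

lemma exists_partLabel_eq {h : α → Fin s} (hh : Function.Surjective h) :
    ∃ x, partLabel x = h := by
  set P := Finpartition.ofSetoid (Setoid.ker h)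
  have hP {a b : α} : P.part a = P.part b ↔ h a = h b := by
    rw [← P.mem_part_iff_part_eq_part (mem_univ _) (mem_univ _),
      Finpartition.mem_part_ofSetoid_iff_rel, Setoid.ker_def, eq_comm]
  let g : Fin s → P.parts := fun l => ⟨P.part (Function.surjInv hh l), P.part_mem.2 (mem_univ _)⟩
  have hg (a : α) : g (h a) = ⟨P.part a, P.part_mem.2 (mem_univ a)⟩ :=
    Subtype.ext (hP.2 (Function.surjInv_eq hh _))
  have hbij : Function.Bijective g := by
    refine ⟨fun l l' hl => ?_, fun ⟨t, ht⟩ => ?_⟩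
    · simpa only [Function.surjInv_eq] using hP.1 (Subtype.mk.inj hl)
    · obtain ⟨a, -, rfl⟩ := P.part_surjOn ht
      exact ⟨h a, hg a⟩
  have hcard : #P.parts = s := by
    rw [← Fintype.card_coe, ← Fintype.card_of_bijective hbij, Fintype.card_fin]
  refine ⟨⟨⟨P, hcard⟩, (Equiv.ofBijective g hbij).symm⟩, funext fun a => ?_⟩
  exact (Equiv.symm_apply_eq _).2 (hg a).symm

variable (α s) in
lemma card_surjective :
    #{h : α → Fin s | Function.Surjective h} =
      s.factorial * Nat.card {P : Finpartition (univ : Finset α) // #P.parts = s} := by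
  have hlabellings (P : {P : Finpartition (univ : Finset α) // #P.parts = s}) :
      Fintype.card (P.1.parts ≃ Fin s) = s.factorial := by
    rw [Fintype.card_equiv (P.1.parts.equivFinOfCardEq P.2), Fintype.card_coe, P.2]
  have hbij : Function.Bijective fun x => (⟨partLabel x, partLabel_surjective x⟩ :
      {h : α → Fin s // Function.Surjective h}) :=
    ⟨fun x y hxy => partLabel_injective (Subtype.mk.inj hxy), fun ⟨h, hh⟩ =>
      (exists_partLabel_eq hh).imp fun x hx => Subtype.ext hx⟩
  rw [← Fintype.card_subtype, ← Fintype.card_of_bijective hbij, Fintype.card_sigma,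
    sum_const_nat fun P _ => hlabellings P, card_univ, Nat.card_eq_fintype_card, mul_comm]

lemma insertNth_succ_surjective_iff {m s : ℕ} {i : Fin (m + 1)} {g : Fin m → Fin s} :
    Function.Surjective (i.insertNth (α := fun _ => Fin (s + 1)) 0 fun j => (g j).succ) ↔
      Function.Surjective g := by
  simp only [Function.Surjective, Fin.forall_fin_succ, i.exists_iff_succAbove,
    Fin.insertNth_apply_same, Fin.insertNth_apply_succAbove, Fin.succ_inj, true_or, true_and,
    (Fin.succ_ne_zero _).symm, false_or]

lemma card_surjective_existsUnique_eq_zero (m s : ℕ) :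
    #{h : Fin (m + 1) → Fin (s + 1) | Function.Surjective h ∧ ∃! j, h j = 0} =
      (m + 1) * (s.factorial * Stir m s) := by
  let insertLevel : Fin (m + 1) × (Fin m → Fin s) → Fin (m + 1) → Fin (s + 1) :=
    fun x => x.1.insertNth (α := fun _ => Fin (s + 1)) 0 fun j => (x.2 j).succ
  have hzero (x) (j) : insertLevel x j = 0 ↔ j = x.1 := by
    rcases Fin.eq_self_or_eq_succAbove x.1 j with rfl | ⟨j, rfl⟩
    · simp [insertLevel]
    · simp [insertLevel, Fin.succ_ne_zero, Fin.succAbove_ne]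
  have hinj : Function.Injective insertLevel := by
    rintro ⟨i, g⟩ ⟨i', g'⟩ h
    obtain rfl : i = i' := (hzero (i', g') i).1 (h ▸ (hzero (i, g) i).2 rfl)
    refine Prod.ext rfl (funext fun j => Fin.succ_injective _ ?_)
    simpa [insertLevel] using congrFun h (i.succAbove j)
  have himage : ({h | Function.Surjective h ∧ ∃! j, h j = 0} : Finset _) =
      (univ ×ˢ ({g | Function.Surjective g} : Finset (Fin m → Fin s))).image insertLevel := by
    ext h
    simp only [mem_filter, mem_univ, true_and, mem_image, mem_product, Prod.exists]
    constructor
    · rintro ⟨hh, i, hi, huniq⟩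
      choose g hg using fun j => Fin.exists_succ_eq_of_ne_zero
        fun hj => i.succAbove_ne j (huniq _ hj)
      obtain rfl : insertLevel (i, g) = h := by
        rw [← Fin.insertNth_self_removeNth i h, hi]
        simp only [insertLevel, hg]
        rfl
      exact ⟨i, g, insertNth_succ_surjective_iff.1 hh, rfl⟩
    · rintro ⟨i, g, hg, rfl⟩
      exact ⟨insertNth_succ_surjective_iff.2 hg, i, (hzero _ i).2 rfl, fun j => (hzero _ j).1⟩
  rw [himage, card_image_of_injective _ hinj, card_product, card_univ, Fintype.card_fin,
    card_surjective, Stir]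

end Surjections

/-! ### Partitions as kernels of level functions -/

lemma mem_negSet {C : Finset ℤ} {x : ℤ} : x ∈ negSet C ↔ -x ∈ C := by
  rw [negSet, mem_image]
  exact ⟨fun ⟨y, hy, hyx⟩ => by rwa [← hyx, neg_neg], fun h => ⟨-x, h, neg_neg x⟩⟩

lemma negSet_negSet (C : Finset ℤ) : negSet (negSet C) = C := by
  ext x
  rw [mem_negSet, mem_negSet, neg_neg]

namespace BPartition

variable {n : ℕ}

lemma mem_signedRange_of_mem (P : BPartition n) {C : Finset ℤ} (hC : C ∈ P.blocks) {x : ℤ}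
    (hx : x ∈ C) : x ∈ signedRange n := by
  rw [mem_signedRange, ← Nat.cast_le (α := ℤ), ← Int.abs_eq_natAbs]
  exact (P.cover x).2 ⟨C, hC, hx⟩

lemma exists_mem_block (P : BPartition n) {x : ℤ} (hx : x ∈ signedRange n) :
    ∃ C ∈ P.blocks, x ∈ C := by
  rw [mem_signedRange, ← Nat.cast_le (α := ℤ), ← Int.abs_eq_natAbs] at hx
  exact (P.cover x).1 hx

lemma block_eq_of_mem (P : BPartition n) {C C' : Finset ℤ} (hC : C ∈ P.blocks)
    (hC' : C' ∈ P.blocks) {x : ℤ} (hx : x ∈ C) (hx' : x ∈ C') : C = C' :=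
  by_contra fun hne => disjoint_left.1 (P.disj C hC C' hC' hne) hx hx'

/-- `P.Rel x y` means that `x` and `y` lie in a common block of `P`. -/
def Rel (P : BPartition n) (x y : ℤ) : Prop := ∃ C ∈ P.blocks, x ∈ C ∧ y ∈ C

lemma mem_block_iff_rel (P : BPartition n) {C : Finset ℤ} (hC : C ∈ P.blocks) {x y : ℤ}
    (hx : x ∈ C) : y ∈ C ↔ P.Rel x y :=
  ⟨fun hy => ⟨C, hC, hx, hy⟩, fun ⟨_, hC', hx', hy'⟩ => P.block_eq_of_mem hC' hC hx' hx ▸ hy'⟩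

lemma blocks_subset_of_rel_iff {P Q : BPartition n} (h : ∀ x y, P.Rel x y ↔ Q.Rel x y) :
    P.blocks ⊆ Q.blocks := by
  intro C hC
  obtain ⟨x, hx⟩ := P.nonempty C hC
  obtain ⟨C', hC', hx'⟩ := Q.exists_mem_block (P.mem_signedRange_of_mem hC hx)
  obtain rfl : C = C' := Finset.ext fun y => by
    rw [P.mem_block_iff_rel hC hx, h, Q.mem_block_iff_rel hC' hx']
  exact hC'

lemma eq_of_rel_iff {P Q : BPartition n} (h : ∀ x y, P.Rel x y ↔ Q.Rel x y) : P = Q := by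
  have hblocks : P.blocks = Q.blocks :=
    (blocks_subset_of_rel_iff h).antisymm (blocks_subset_of_rel_iff fun x y => (h x y).symm)
  cases P
  cases Q
  congr

end BPartition

section KernelPartition

variable {n r : ℕ} {f g : Fin n → ℤ}

/-- The fibre over `v` of the odd extension of `f`. -/
noncomputable def levelSet (f : Fin n → ℤ) (v : ℤ) : Finset ℤ :=
  (signedRange n).filter fun x => oddExt f x = v

lemma mem_levelSet {v x : ℤ} : x ∈ levelSet f v ↔ x ∈ signedRange n ∧ oddExt f x = v :=
  mem_filter

lemma negSet_levelSet (f : Fin n → ℤ) (v : ℤ) : negSet (levelSet f v) = levelSet f (-v) := by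
  ext x
  rw [mem_negSet, mem_levelSet, mem_levelSet, neg_mem_signedRange, oddExt_neg, neg_eq_iff_eq_neg]

lemma eq_of_levelSet_eq {x v : ℤ} (hx : x ∈ signedRange n)
    (h : levelSet f (oddExt f x) = levelSet f v) : oddExt f x = v :=
  (mem_levelSet.1 (h ▸ mem_levelSet.2 ⟨hx, rfl⟩)).2

lemma negSet_levelSet_eq_self_iff {x : ℤ} (hx : x ∈ signedRange n) :
    negSet (levelSet f (oddExt f x)) = levelSet f (oddExt f x) ↔ oddExt f x = 0 := by
  rw [negSet_levelSet]
  refine ⟨fun h => self_eq_neg.1 (eq_of_levelSet_eq hx h.symm), fun h => by rw [h, neg_zero]⟩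

/-- The `Bₙ`-partition of `{-n,…,-1,1,…,n}` into the fibres of the odd extension of `f`; its
zero-block is the fibre over `0`. -/
noncomputable def kernelPartition (f : Fin n → ℤ) : BPartition n where
  blocks := (signedRange n).image fun x => levelSet f (oddExt f x)
  cover x := by
    rw [Int.abs_eq_natAbs, Nat.cast_le, ← mem_signedRange]
    simp only [mem_image, exists_exists_and_eq_and, mem_levelSet]
    exact ⟨fun hx => ⟨x, hx, hx, rfl⟩, fun ⟨_, _, hx, _⟩ => hx⟩
  nonempty := forall_mem_image.2 fun x hx => ⟨x, mem_levelSet.2 ⟨hx, rfl⟩⟩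
  disj := forall_mem_image.2 fun x _ => forall_mem_image.2 fun y _ hne =>
    disjoint_left.2 fun z hz hz' =>
      hne (by rw [← (mem_levelSet.1 hz).2, ← (mem_levelSet.1 hz').2])
  closed := forall_mem_image.2 fun x hx =>
    mem_image.2 ⟨-x, neg_mem_signedRange.2 hx, by rw [negSet_levelSet, oddExt_neg]⟩
  zeroUnique := forall_mem_image.2 fun x hx => forall_mem_image.2 fun y hy hx0 hy0 => by
    rw [(negSet_levelSet_eq_self_iff hx).1 hx0, (negSet_levelSet_eq_self_iff hy).1 hy0]

lemma mem_blocks_kernelPartition {C : Finset ℤ} :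
    C ∈ (kernelPartition f).blocks ↔ ∃ x ∈ signedRange n, levelSet f (oddExt f x) = C :=
  mem_image

lemma kernelPartition_rel {x y : ℤ} : (kernelPartition f).Rel x y ↔
    x ∈ signedRange n ∧ y ∈ signedRange n ∧ oddExt f x = oddExt f y := by
  simp only [BPartition.Rel, mem_blocks_kernelPartition, exists_exists_and_eq_and, mem_levelSet]
  exact ⟨fun ⟨_, _, hx, hy⟩ => ⟨hx.1, hy.1, hx.2.trans hy.2.symm⟩,
    fun ⟨hx, hy, hxy⟩ => ⟨x, hx, ⟨hx, rfl⟩, hy, hxy.symm⟩⟩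

lemma kernelPartition_eq_iff : kernelPartition f = kernelPartition g ↔
    ∀ x ∈ signedRange n, ∀ y ∈ signedRange n,
      (oddExt f x = oddExt f y ↔ oddExt g x = oddExt g y) := by
  constructor
  · intro h x hx y hy
    simpa only [kernelPartition_rel, hx, hy, true_and] using
      iff_of_eq (congrArg (fun P => BPartition.Rel P x y) h)
  · refine fun h => BPartition.eq_of_rel_iff fun x y => ?_
    rw [kernelPartition_rel, kernelPartition_rel]
    exact and_congr_right fun hx => and_congr_right fun hy => h x hx y hy

lemma hasPairs_kernelPartition (hf : f ∈ levelFunctions n r) : hasPairs (kernelPartition f) r := by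
  have hblocks : ((kernelPartition f).blocks.filter fun C => negSet C ≠ C) =
      (signedRange r).image (levelSet f) := by
    ext C
    simp only [mem_filter, mem_blocks_kernelPartition, mem_image]
    constructor
    · rintro ⟨⟨x, hx, rfl⟩, hne⟩
      rw [Ne, negSet_levelSet_eq_self_iff hx] at hne
      exact ⟨_, mem_signedRange.2 ⟨hne, natAbs_oddExt_le hf hx⟩, rfl⟩
    · rintro ⟨v, hv, rfl⟩
      obtain ⟨x, hx, rfl⟩ := exists_oddExt_eq hf hv
      refine ⟨⟨x, hx, rfl⟩, ?_⟩
      rw [Ne, negSet_levelSet_eq_self_iff hx]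
      exact (mem_signedRange.1 hv).1
  have hinj : Set.InjOn (levelSet f) (signedRange r) := fun v hv v' _ h => by
    obtain ⟨x, hx, rfl⟩ := exists_oddExt_eq hf hv
    exact eq_of_levelSet_eq hx h
  rw [hasPairs, hblocks, card_image_of_injOn hinj, card_signedRange]

lemma card_filter_pos_levelSet_zero (f : Fin n → ℤ) :
    #((levelSet f 0).filter fun x => 0 < x) = #{j | f j = 0} := by
  have himage : ((levelSet f 0).filter fun x => 0 < x) =
      ({j | f j = 0} : Finset (Fin n)).image fun j : Fin n => (j : ℤ) + 1 := by
    ext x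
    simp only [mem_filter, mem_levelSet, mem_image, mem_univ, true_and]
    constructor
    · rintro ⟨⟨hx, hfx⟩, hpos⟩
      obtain ⟨j, hj⟩ := exists_eq_succ_or_eq_neg_succ hx
      obtain rfl : x = (j : ℤ) + 1 := by omega
      exact ⟨j, by rwa [oddExt_succ] at hfx, rfl⟩
    · rintro ⟨j, hj, rfl⟩
      exact ⟨⟨succ_mem_signedRange j, by rwa [oddExt_succ]⟩, by omega⟩
  rw [himage, card_image_of_injective _ fun i j h => Fin.ext (by omega)]

lemma isDPartition_kernelPartition_iff : IsDPartition (kernelPartition f) ↔ ¬∃! j, f j = 0 := by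
  have hzero : IsDPartition (kernelPartition f) ↔
      ((∃ j, f j = 0) → 2 ≤ #((levelSet f 0).filter fun x => 0 < x)) := by
    refine ⟨fun h ⟨j, hj⟩ => ?_, fun h C hC hneg => ?_⟩
    · have hj' : oddExt f ((j : ℤ) + 1) = 0 := by rw [oddExt_succ, hj]
      simpa only [hj'] using h _
        (mem_blocks_kernelPartition.2 ⟨_, succ_mem_signedRange j, rfl⟩)
        ((negSet_levelSet_eq_self_iff (succ_mem_signedRange j)).2 hj')
    · obtain ⟨x, hx, rfl⟩ := mem_blocks_kernelPartition.1 hC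
      rw [negSet_levelSet_eq_self_iff hx] at hneg
      obtain ⟨j, hj⟩ := exists_eq_succ_or_eq_neg_succ hx
      have hfj := oddExt_natAbs f (x := x) (j := j) (by omega)
      rw [hneg] at hfj ⊢
      exact h ⟨j, by omega⟩
  have hexists : (∃ j, f j = 0) ↔ #{j | f j = 0} ≠ 0 := by
    simp only [ne_eq, card_eq_zero, filter_eq_empty_iff, mem_univ, true_implies, not_forall,
      not_not]
  rw [hzero, card_filter_pos_levelSet_zero, Fintype.existsUnique_iff_card_one, hexists]
  omega

end KernelPartition

lemma exists_odd_labelling {α : Type*} {ν : α → α} (hν : Function.Involutive ν) {r : ℕ} :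
    ∀ {s : Finset α}, (∀ a ∈ s, ν a ∈ s ∧ ν a ≠ a) → #s = 2 * r →
      ∃ l : α → ℤ, (∀ a ∈ s, l (ν a) = -l a ∧ l a ∈ signedRange r) ∧ Set.InjOn l s := by
  induction r with
  | zero =>
    intro s _ hcard
    obtain rfl := card_eq_zero.1 hcard
    exact ⟨0, by simp, by simp⟩
  | succ r ih =>
    intro s hs hcard
    obtain ⟨a, ha⟩ := card_pos.1 (by omega : 0 < #s)
    obtain ⟨hνa, hne⟩ := hs a ha
    have hmem {b : α} (hb : b ∈ s) (h : b ≠ a) (h' : b ≠ ν a) : b ∈ (s.erase a).erase (ν a) :=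
      mem_erase.2 ⟨h', mem_erase.2 ⟨h, hb⟩⟩
    have hs' : ∀ b ∈ (s.erase a).erase (ν a), ν b ∈ (s.erase a).erase (ν a) ∧ ν b ≠ b := by
      intro b hb
      simp only [mem_erase] at hb
      exact ⟨hmem (hs b hb.2.2).1 (fun h => hb.1 (by rw [← h, hν b])) (hν.injective.ne hb.2.1),
        (hs b hb.2.2).2⟩
    have hcard' : #((s.erase a).erase (ν a)) = 2 * r := by
      rw [card_erase_of_mem (mem_erase.2 ⟨hne, hνa⟩), card_erase_of_mem ha]
      omega
    obtain ⟨l, hl, hinj⟩ := ih hs' hcard'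
    have hlt {b : α} (hb : b ∈ s) (h : b ≠ a) (h' : b ≠ ν a) :
        l (ν b) = -l b ∧ l b ≠ 0 ∧ (l b).natAbs ≤ r :=
      (hl b (hmem hb h h')).imp_right mem_signedRange.1
    refine ⟨fun b => if b = a then r + 1 else if b = ν a then -(r + 1) else l b, ?_, ?_⟩
    · intro b hb
      have := @hlt b hb
      have hba : ν b = a ↔ b = ν a := hν.eq_iff
      have hbν : ν b = ν a ↔ b = a := hν.injective.eq_iff
      simp only [mem_signedRange, hba, hbν]
      grind
    · intro b hb c hc hbc
      have := @hlt b hb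
      have := @hlt c hc
      have := @hinj b
      simp only at hbc
      split_ifs at hbc
      all_goals grind

section LabelledPartitions

variable {n r : ℕ}

lemma BPartition.exists_labelling {P : BPartition n} (hP : hasPairs P r) :
    ∃ l : Finset ℤ → ℤ, (∀ C ∈ P.blocks, l (negSet C) = -l C ∧ (l C).natAbs ≤ r) ∧
      Set.InjOn l P.blocks ∧ ∀ v ∈ signedRange r, ∃ C ∈ P.blocks, l C = v := by
  have hnonzero : ∀ C ∈ P.blocks.filter fun C => negSet C ≠ C,
      (negSet C ∈ P.blocks.filter fun C => negSet C ≠ C) ∧ negSet C ≠ C := by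
    intro C hC
    obtain ⟨hC, hne⟩ := mem_filter.1 hC
    exact ⟨mem_filter.2 ⟨P.closed C hC, by rw [negSet_negSet]; exact hne.symm⟩, hne⟩
  obtain ⟨l, hl, hinj⟩ := exists_odd_labelling negSet_negSet hnonzero hP
  have hne0 {C : Finset ℤ} (hC : C ∈ P.blocks) (hne : negSet C ≠ C) :
      l (negSet C) = -l C ∧ l C ≠ 0 ∧ (l C).natAbs ≤ r :=
    (hl C (mem_filter.2 ⟨hC, hne⟩)).imp_right mem_signedRange.1
  refine ⟨fun C => if negSet C = C then 0 else l C, fun C hC => ?_, fun C hC C' hC' h => ?_,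
    fun v hv => ?_⟩
  · have := hne0 hC
    have := negSet_negSet C
    grind
  · have := P.zeroUnique C hC C' hC'
    have := @hinj C
    simp only [coe_filter, Set.mem_ofPred_eq] at this
    grind
  · obtain ⟨C, hC, rfl⟩ := surj_on_of_inj_on_of_card_le (fun C _ => l C) (fun C hC => (hl C hC).2)
      (fun C C' hC hC' h => hinj hC hC' h) (by rw [card_signedRange]; exact hP.ge) v hv
    obtain ⟨hC, hne⟩ := mem_filter.1 hC
    exact ⟨C, hC, if_neg hne⟩

lemma exists_kernelPartition_eq {P : BPartition n} (hP : hasPairs P r) :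
    ∃ f ∈ levelFunctions n r, kernelPartition f = P := by
  obtain ⟨l, hl, hinj, hsurj⟩ := BPartition.exists_labelling hP
  choose! B hB hxB using fun x hx => P.exists_mem_block (x := x) hx
  have hval {C : Finset ℤ} (hC : C ∈ P.blocks) {x : ℤ} (hx : x ∈ C) : B x = C :=
    have hx' := P.mem_signedRange_of_mem hC hx
    P.block_eq_of_mem (hB x hx') hC (hxB x hx') hx
  have hodd : ∀ x ∈ signedRange n, l (B (-x)) = -l (B x) := by
    intro x hx
    rw [hval (P.closed _ (hB x hx)) (mem_negSet.2 (by rw [neg_neg]; exact hxB x hx)),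
      (hl _ (hB x hx)).1]
  have hext {x : ℤ} (hx : x ∈ signedRange n) :
      oddExt (fun j : Fin n => l (B ((j : ℤ) + 1))) x = l (B x) :=
    oddExt_eq_of_odd (φ := fun x => l (B x)) hodd (fun _ => rfl) hx
  refine ⟨_,
    mem_levelFunctions.2 ⟨fun j => (hl _ (hB _ (succ_mem_signedRange j))).2, fun v hv => ?_⟩,
    BPartition.eq_of_rel_iff fun x y => ?_⟩
  · obtain ⟨C, hC, rfl⟩ := hsurj v hv
    obtain ⟨x, hx⟩ := P.nonempty C hC
    have hxn := P.mem_signedRange_of_mem hC hx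
    obtain ⟨j, hj⟩ := exists_eq_succ_or_eq_neg_succ hxn
    refine ⟨j, ?_⟩
    rw [← hval hC hx, ← hext hxn, oddExt_natAbs _ (j := j) (by omega)]
  · rw [kernelPartition_rel]
    constructor
    · rintro ⟨hx, hy, hxy⟩
      rw [hext hx, hext hy] at hxy
      exact ⟨B x, hB x hx, hxB x hx, hinj (hB x hx) (hB y hy) hxy ▸ hxB y hy⟩
    · rintro ⟨C, hC, hx, hy⟩
      have hxn := P.mem_signedRange_of_mem hC hx
      have hyn := P.mem_signedRange_of_mem hC hy
      exact ⟨hxn, hyn, by rw [hext hxn, hext hyn, hval hC hx, hval hC hy]⟩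

/-- The relabelling of the levels of `f` by the signed permutation with window `w`. -/
def relabel (f : Fin n → ℤ) (w : Fin r → ℤ) (j : Fin n) : ℤ := oddExt w (f j)

lemma oddExt_relabel (f : Fin n → ℤ) (w : Fin r → ℤ) {x : ℤ} (hx : x ∈ signedRange n) :
    oddExt (relabel f w) x = oddExt w (oddExt f x) :=
  oddExt_eq_of_odd (φ := fun x => oddExt w (oddExt f x))
    (fun _ _ => by simp only [oddExt_neg]) (fun j => by rw [oddExt_succ, relabel]) hx

lemma oddExt_injOn {w : Fin r → ℤ} (hw : IsSignedPerm w) {x y : ℤ} (hx : x.natAbs ≤ r)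
    (hy : y.natAbs ≤ r) (hxy : oddExt w x = oddExt w y) : x = y := by
  obtain ⟨hrange, hinj⟩ := isSignedPerm_iff.1 hw
  have habs {z : ℤ} (hz : z.natAbs ≤ r) (hne : z ≠ 0) :
      ∃ j : Fin r, z.natAbs = j + 1 ∧ (oddExt w z).natAbs = (w j).natAbs ∧ w j ≠ 0 := by
    obtain ⟨j, hj⟩ := exists_eq_succ_or_eq_neg_succ (mem_signedRange.2 ⟨hne, hz⟩)
    have hzj : z.natAbs = j + 1 := by omega
    exact ⟨j, hzj, oddExt_natAbs w hzj, (mem_signedRange.1 (hrange j)).1⟩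
  by_contra hne
  have hx0 : x ≠ 0 := by
    rintro rfl
    obtain ⟨j, -, hj, hj0⟩ := habs hy (Ne.symm hne)
    rw [← hxy, oddExt_zero] at hj
    omega
  obtain ⟨i, hi, hwi, hi0⟩ := habs hx hx0
  have hy0 : y ≠ 0 := by
    rintro rfl
    rw [hxy, oddExt_zero] at hwi
    omega
  obtain ⟨j, hj, hwj, -⟩ := habs hy hy0
  obtain rfl : i = j := hinj (hwi.symm.trans (hxy ▸ hwj))
  obtain rfl : x = -y := by omega
  rw [oddExt_neg] at hxy hwi
  omega

lemma relabel_mem_levelFunctions {f : Fin n → ℤ} (hf : f ∈ levelFunctions n r) {w : Fin r → ℤ}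
    (hw : IsSignedPerm w) : relabel f w ∈ levelFunctions n r := by
  obtain ⟨hbound, hattained⟩ := mem_levelFunctions.1 hf
  refine mem_levelFunctions.2 ⟨fun j => ?_, fun v hv => ?_⟩
  · rcases eq_or_ne (f j) 0 with h0 | h0
    · simp [relabel, h0, oddExt_zero]
    · obtain ⟨l, hl⟩ := exists_eq_succ_or_eq_neg_succ (mem_signedRange.2 ⟨h0, hbound j⟩)
      rw [relabel, oddExt_natAbs w (j := l) (by omega)]
      exact (mem_signedRange.1 ((isSignedPerm_iff.1 hw).1 l)).2
  · obtain ⟨l, hl⟩ := exists_eq_succ_or_eq_neg_succ hv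
    obtain ⟨σ, hσ⟩ := exists_perm_natAbs_eq hw
    obtain ⟨j, hj⟩ := hattained _ (succ_mem_signedRange (σ.symm l))
    refine ⟨j, ?_⟩
    rw [relabel, oddExt_natAbs w (j := σ.symm l) (by omega), hσ, σ.apply_symm_apply]
    omega

lemma kernelPartition_relabel {f : Fin n → ℤ} (hf : f ∈ levelFunctions n r) {w : Fin r → ℤ}
    (hw : IsSignedPerm w) : kernelPartition (relabel f w) = kernelPartition f := by
  refine kernelPartition_eq_iff.2 fun x hx y hy => ?_
  rw [oddExt_relabel f w hx, oddExt_relabel f w hy]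
  exact ⟨oddExt_injOn hw (natAbs_oddExt_le hf hx) (natAbs_oddExt_le hf hy), congrArg _⟩

lemma relabel_injective {f : Fin n → ℤ} (hf : f ∈ levelFunctions n r) :
    Function.Injective (relabel f : (Fin r → ℤ) → Fin n → ℤ) := by
  intro w w' h
  funext l
  obtain ⟨x, hx, hxl⟩ := exists_oddExt_eq hf (succ_mem_signedRange l)
  rw [← oddExt_succ w, ← oddExt_succ w', ← hxl, ← oddExt_relabel f w hx, h, oddExt_relabel f w' hx]

lemma exists_relabel_eq {f g : Fin n → ℤ} (hf : f ∈ levelFunctions n r)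
    (hg : g ∈ levelFunctions n r) (h : kernelPartition f = kernelPartition g) :
    ∃ w : Fin r → ℤ, IsSignedPerm w ∧ relabel f w = g := by
  choose x hx hfx using fun l : Fin r => exists_oddExt_eq hf (succ_mem_signedRange l)
  have hker {y z : ℤ} (hy : y ∈ signedRange n) (hz : z ∈ signedRange n) :
      oddExt f y = oddExt f z ↔ oddExt g y = oddExt g z := kernelPartition_eq_iff.1 h y hy z hz
  have hker_neg {y z : ℤ} (hy : y ∈ signedRange n) (hz : z ∈ signedRange n) :
      oddExt f y = -oddExt f z ↔ oddExt g y = -oddExt g z := by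
    simpa only [oddExt_neg] using hker hy (neg_mem_signedRange.2 hz)
  have hker_zero {y : ℤ} (hy : y ∈ signedRange n) : oddExt f y = 0 ↔ oddExt g y = 0 := by
    simpa only [self_eq_neg] using hker_neg hy hy
  refine ⟨fun l => oddExt g (x l), isSignedPerm_iff.2 ⟨fun l => ?_, fun l l' hll' => ?_⟩,
    funext fun j => ?_⟩
  · rw [mem_signedRange, Ne, ← hker_zero (hx l), hfx]
    exact ⟨by omega, natAbs_oddExt_le hg (hx l)⟩
  · rcases Int.natAbs_eq_natAbs_iff.1 hll' with heq | heq
    · rw [← hker (hx l) (hx l'), hfx, hfx] at heq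
      omega
    · rw [← hker_neg (hx l) (hx l'), hfx, hfx] at heq
      omega
  · have hj := succ_mem_signedRange j
    rw [relabel, ← oddExt_succ f j, ← oddExt_succ g j]
    rcases eq_or_ne (oddExt f ((j : ℤ) + 1)) 0 with h0 | h0
    · rw [h0, oddExt_zero, (hker_zero hj).1 h0]
    · obtain ⟨l, hl | hl⟩ :=
        exists_eq_succ_or_eq_neg_succ (mem_signedRange.2 ⟨h0, natAbs_oddExt_le hf hj⟩)
      · rw [hl, oddExt_succ, ← hker (hx l) hj, hfx, hl]
      · rw [hl, oddExt_neg, oddExt_succ, eq_comm, ← hker_neg hj (hx l), hfx, hl]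

lemma card_filter_kernelPartition_eq {f : Fin n → ℤ} (hf : f ∈ levelFunctions n r) :
    #((levelFunctions n r).filter fun g => kernelPartition g = kernelPartition f) =
      2 ^ r * r.factorial := by
  have himage : ((levelFunctions n r).filter fun g => kernelPartition g = kernelPartition f) =
      (signedPerms r).image (relabel f) := by
    ext g
    simp only [mem_filter, mem_image, mem_signedPerms]
    exact ⟨fun ⟨hg, h⟩ => exists_relabel_eq hf hg h.symm, fun ⟨w, hw, h⟩ =>
      h ▸ ⟨relabel_mem_levelFunctions hf hw, kernelPartition_relabel hf hw⟩⟩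
  rw [himage, card_image_of_injective _ (relabel_injective hf), card_signedPerms]

/-- Each `Bₙ`-partition with `r` pairs of nonzero blocks is the kernel of `2 ^ r * r!` level
functions. -/
lemma two_pow_mul_factorial_mul_SD (n r : ℕ) :
    2 ^ r * r.factorial * SD n r = #((levelFunctions n r).filter fun f => ¬∃! j, f j = 0) := by
  set K := (levelFunctions n r).filter fun f => ¬∃! j, f j = 0 with hK
  have himage (P : BPartition n) :
      P ∈ K.image kernelPartition ↔ IsDPartition P ∧ hasPairs P r := by
    simp only [hK, mem_image, mem_filter, ← isDPartition_kernelPartition_iff]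
    constructor
    · rintro ⟨f, ⟨hf, hD⟩, rfl⟩
      exact ⟨hD, hasPairs_kernelPartition hf⟩
    · rintro ⟨hD, hP⟩
      obtain ⟨f, hf, rfl⟩ := exists_kernelPartition_eq hP
      exact ⟨f, ⟨hf, hD⟩, rfl⟩
  have hfibre : ∀ P ∈ K.image kernelPartition,
      #(K.filter fun f => kernelPartition f = P) = 2 ^ r * r.factorial := by
    intro P hP
    obtain ⟨f, hf, rfl⟩ := exists_kernelPartition_eq ((himage P).1 hP).2
    have hD := ((himage _).1 hP).1
    rw [← card_filter_kernelPartition_eq hf, hK, filter_filter]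
    congr 1
    refine filter_congr fun g _ => and_iff_right_of_imp fun hg => ?_
    rw [← isDPartition_kernelPartition_iff, hg]
    exact hD
  rw [card_eq_sum_card_image kernelPartition K, sum_const_nat hfibre, SD,
    Nat.subtype_card _ himage, mul_comm]

end LabelledPartitions

/-! ### Level functions as signed permutations with marked positions -/

section Sorting

variable {n : ℕ}

/-- The order in which a level function `f` lists the ground set: increasing level first, then
increasing value. -/
def sortKey (f : Fin n → ℤ) (x : ℤ) : ℤ ×ₗ ℤ := toLex (oddExt f x, x)

lemma sortKey_injective (f : Fin n → ℤ) : Function.Injective (sortKey f) :=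
  fun _ _ h => congrArg (fun p => (ofLex p).2) h

lemma sortKey_lt_sortKey {f : Fin n → ℤ} {x y : ℤ} : sortKey f x < sortKey f y ↔
    oddExt f x < oddExt f y ∨ oddExt f x = oddExt f y ∧ x < y :=
  Prod.Lex.toLex_lt_toLex

/-- The sequence `0 = w(0), w(1), …, w(n)` is increasing in the order given by `f`. -/
def IsSortedBy (f w : Fin n → ℤ) : Prop :=
  ∀ k < n, sortKey f (bVal w k) < sortKey f (bVal w (k + 1))

lemma isSortedBy_iff {f w : Fin n → ℤ} : IsSortedBy f w ↔
    (∀ i, sortKey f 0 < sortKey f (w i)) ∧ StrictMono fun i => sortKey f (w i) := by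
  have hsucc : IsSortedBy f w ↔ StrictMono fun k : Fin (n + 1) => sortKey f (bVal w k) := by
    rw [Fin.strictMono_iff_lt_succ, Fin.forall_iff]
    rfl
  rw [hsucc]
  simp only [StrictMono, Fin.forall_fin_succ, Fin.val_zero, bVal_zero, Fin.val_succ, bVal_succ,
    Fin.succ_lt_succ_iff, Fin.succ_pos, true_implies, Fin.not_lt_zero,
    false_implies, true_and]

/-- The element of `{j, -j}` which comes after `0` in the order given by `f`. -/
def positiveRep (f : Fin n → ℤ) (j : Fin n) : ℤ := if f j < 0 then -((j : ℤ) + 1) else (j : ℤ) + 1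

lemma natAbs_positiveRep (f : Fin n → ℤ) (j : Fin n) : (positiveRep f j).natAbs = j + 1 := by
  rw [positiveRep]
  split_ifs <;> omega

lemma positiveRep_injective (f : Fin n → ℤ) : Function.Injective (positiveRep f) := by
  intro i j h
  have := congrArg Int.natAbs h
  simp only [natAbs_positiveRep] at this
  omega

lemma sortKey_zero_lt_iff {f : Fin n → ℤ} {j : Fin n} {x : ℤ} (hx : x.natAbs = j + 1) :
    sortKey f 0 < sortKey f x ↔ x = positiveRep f j := by
  rw [sortKey_lt_sortKey, oddExt_zero, positiveRep]
  obtain rfl | rfl : x = (j : ℤ) + 1 ∨ x = -((j : ℤ) + 1) := by omega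
  · rw [oddExt_succ]
    split_ifs <;> omega
  · rw [oddExt_neg, oddExt_succ]
    split_ifs <;> omega

lemma existsUnique_isSortedBy (f : Fin n → ℤ) : ∃! w, IsSignedPerm w ∧ IsSortedBy f w := by
  have hinj : Function.Injective fun j => sortKey f (positiveRep f j) :=
    (sortKey_injective f).comp (positiveRep_injective f)
  set K := univ.image fun j => sortKey f (positiveRep f j)
  have hcard : #K = n := by rw [card_image_of_injective _ hinj, card_univ, Fintype.card_fin]
  choose σ hσ using fun i => (mem_image_univ_iff_mem_range.1 (K.orderEmbOfFin_mem hcard i))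
  have hσinj : Function.Injective σ := fun i i' h =>
    (K.orderEmbOfFin hcard).injective (by rw [← hσ, ← hσ, h])
  refine ⟨fun i => positiveRep f (σ i), ⟨isSignedPerm_iff.2 ⟨fun i => ?_, fun i i' h => ?_⟩,
    isSortedBy_iff.2 ⟨fun i => ?_, ?_⟩⟩, fun w ⟨hw, hsorted⟩ => ?_⟩
  · have := natAbs_positiveRep f (σ i)
    exact mem_signedRange.2 (by omega)
  · simp only [natAbs_positiveRep, add_left_inj, Fin.val_inj] at h
    exact hσinj h
  · exact (sortKey_zero_lt_iff (natAbs_positiveRep f _)).2 rfl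
  · simp only [hσ]
    exact (K.orderEmbOfFin hcard).strictMono
  · obtain ⟨hpos, hmono⟩ := isSortedBy_iff.1 hsorted
    obtain ⟨τ, hτ⟩ := exists_perm_natAbs_eq hw
    have hmem (i) : sortKey f (w i) ∈ K :=
      mem_image.2 ⟨τ i, mem_univ _, by rw [← (sortKey_zero_lt_iff (hτ i)).1 (hpos i)]⟩
    have huniq := orderEmbOfFin_unique hcard hmem hmono
    exact funext fun i => sortKey_injective f ((congrFun huniq i).trans (hσ i).symm)

end Sorting

lemma exists_count_succ_eq {p : ℕ → Prop} [DecidablePred p] {l : ℕ} (hl : 1 ≤ l) :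
    ∀ {n : ℕ}, l ≤ Nat.count p n → ∃ i < n, Nat.count p (i + 1) = l
  | 0, h => by simp only [Nat.count_zero] at h; omega
  | n + 1, h => by
    rcases le_or_gt l (Nat.count p n) with hle | hgt
    · obtain ⟨i, hi, hil⟩ := exists_count_succ_eq hl hle
      exact ⟨i, by omega, hil⟩
    · refine ⟨n, by omega, ?_⟩
      rw [Nat.count_succ] at h ⊢
      split_ifs at h ⊢ <;> omega

lemma count_lt_succ_eq {G : ℕ → ℤ} (h0 : G 0 = 0) :
    ∀ {n : ℕ}, (∀ k < n, G k ≤ G (k + 1) ∧ G (k + 1) ≤ G k + 1) →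
      (Nat.count (fun k => G k < G (k + 1)) n : ℤ) = G n
  | 0, _ => by rw [Nat.count_zero, h0, Nat.cast_zero]
  | n + 1, h => by
    have hn := h n (by omega)
    rw [Nat.count_succ, Nat.cast_add, count_lt_succ_eq h0 fun k hk => h k (by omega)]
    split_ifs <;> omega

lemma card_eq_of_existsUnique {α β : Type*} {s : Finset α} {t : Finset β} {R : α → β → Prop}
    (hs : ∀ a ∈ s, ∃! b, b ∈ t ∧ R a b) (ht : ∀ b ∈ t, ∃! a, a ∈ s ∧ R a b) : #s = #t := by
  have hone := card_mul_eq_card_mul (s := s) (t := t) R (m := 1) (n := 1)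
    (fun a ha => card_eq_one.2 <| (singleton_iff_unique_mem _).2 <| by
      simpa only [mem_bipartiteAbove] using hs a ha)
    (fun b hb => card_eq_one.2 <| (singleton_iff_unique_mem _).2 <| by
      simpa only [mem_bipartiteBelow] using ht b hb)
  rwa [mul_one, mul_one] at hone

section Encoding

variable {n r : ℕ} {f w : Fin n → ℤ} {S S' : Finset ℕ}

/-- The type `B` descent set of `w`. -/
noncomputable def descentsB (w : Fin n → ℤ) : Finset ℕ :=
  (range n).filter fun i => bVal w (i + 1) < bVal w i

lemma bVal_ne_bVal_succ (hw : IsSignedPerm w) {k : ℕ} (hk : k < n) :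
    bVal w k ≠ bVal w (k + 1) := by
  obtain ⟨hrange, hinj⟩ := isSignedPerm_iff.1 hw
  rw [bVal_succ w ⟨k, hk⟩]
  cases k with
  | zero => rw [bVal_zero]; exact (mem_signedRange.1 (hrange _)).1.symm
  | succ k =>
    rw [bVal_succ w ⟨k, by omega⟩]
    exact fun h => by simpa using hinj (congrArg Int.natAbs h)

lemma descentsB_subset_iff (hw : IsSignedPerm w) :
    descentsB w ⊆ S ↔ ∀ k < n, k ∉ S → bVal w k < bVal w (k + 1) := by
  simp only [descentsB, subset_iff, mem_filter, mem_range, and_imp]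
  refine forall_congr' fun k => forall_congr' fun hk => ?_
  rw [← not_imp_not, not_lt, le_iff_lt_or_eq, or_iff_left (bVal_ne_bVal_succ hw hk)]

/-- `f` encodes the set `S` and the window `w`: the levels of `f` along `w(1), …, w(n)` increase
by one right after the positions in `S`, starting from level `0` at `w(0) = 0`. -/
def Encodes (f : Fin n → ℤ) (S : Finset ℕ) (w : Fin n → ℤ) : Prop :=
  ∀ i : Fin n, oddExt f (w i) = Nat.count (· ∈ S) (i + 1)

lemma Encodes.oddExt_bVal (h : Encodes f S w) {k : ℕ} (hk : k ≤ n) :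
    oddExt f (bVal w k) = Nat.count (· ∈ S) k := by
  cases k with
  | zero => rw [bVal_zero, oddExt_zero, Nat.count_zero, Nat.cast_zero]
  | succ k => rw [bVal_succ w ⟨k, hk⟩, h]

lemma Encodes.isSortedBy_iff (h : Encodes f S w) (hw : IsSignedPerm w) :
    IsSortedBy f w ↔ descentsB w ⊆ S := by
  rw [descentsB_subset_iff hw]
  refine forall_congr' fun k => forall_congr' fun hk => ?_
  rw [sortKey_lt_sortKey, h.oddExt_bVal hk.le, h.oddExt_bVal hk, Nat.count_succ]
  split_ifs with hkS <;> simp [hkS]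

lemma Encodes.subset (h : Encodes f S w) (h' : Encodes f S' w) (hS : S ⊆ range n) : S ⊆ S' := by
  intro k hk
  have hkn := mem_range.1 (hS hk)
  have hcount {m} (hm : m ≤ n) : Nat.count (· ∈ S) m = Nat.count (· ∈ S') m :=
    Nat.cast_injective (R := ℤ) (by rw [← h.oddExt_bVal hm, ← h'.oddExt_bVal hm])
  rw [← Nat.count_lt_count_succ_iff (p := (· ∈ S')), ← hcount hkn.le, ← hcount hkn]
  exact Nat.count_lt_count_succ_iff.2 hk

lemma existsUnique_encodes (hw : IsSignedPerm w) (S : Finset ℕ) : ∃! f, Encodes f S w := by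
  obtain ⟨σ, hσ⟩ := exists_perm_natAbs_eq hw
  have hval (f : Fin n → ℤ) (i) : oddExt f (w i) = (w i).sign * f (σ i) := by
    have := hσ i
    rw [oddExt, hσ, bVal_succ]
  have hsign (i) : (w i).sign * (w i).sign = 1 := by
    rw [← Int.sign_mul, Int.sign_eq_one_iff_pos, mul_self_pos]
    exact fun h0 => by simpa [h0] using hσ i
  refine ⟨fun j => (w (σ.symm j)).sign * Nat.count (· ∈ S) (σ.symm j + 1), fun i => ?_,
    fun f hf => funext fun j => ?_⟩
  · simp only [hval, σ.symm_apply_apply]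
    rw [← mul_assoc, hsign, one_mul]
  · simp only [← hf (σ.symm j), hval, σ.apply_symm_apply]
    rw [← mul_assoc, hsign, one_mul]

lemma count_mem_eq_card (hS : S ⊆ range n) : Nat.count (· ∈ S) n = #S := by
  rw [Nat.count_eq_card_filter_range, filter_mem_eq_inter, inter_eq_right.2 hS]

lemma Encodes.exists_perm_natAbs_eq_count (h : Encodes f S w) (hw : IsSignedPerm w) :
    ∃ σ : Equiv.Perm (Fin n), ∀ i, (f (σ i)).natAbs = Nat.count (· ∈ S) (i + 1) := by
  obtain ⟨σ, hσ⟩ := exists_perm_natAbs_eq hw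
  exact ⟨σ, fun i => by rw [← oddExt_natAbs f (hσ i), h, Int.natAbs_natCast]⟩

lemma Encodes.mem_levelFunctions (h : Encodes f S w) (hw : IsSignedPerm w) (hS : S ⊆ range n) :
    f ∈ levelFunctions n #S := by
  obtain ⟨σ, hσ⟩ := h.exists_perm_natAbs_eq_count hw
  have hcard := count_mem_eq_card hS
  refine _root_.mem_levelFunctions.2 ⟨σ.surjective.forall.2 fun i => ?_, fun v hv => ?_⟩
  · rw [hσ, ← hcard]
    exact Nat.count_monotone _ i.2
  · obtain ⟨hv0, hvr⟩ := mem_signedRange.1 hv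
    obtain ⟨i, hi, hil⟩ := exists_count_succ_eq (by omega) (hcard ▸ hvr)
    exact ⟨σ ⟨i, hi⟩, by rw [hσ, hil]⟩

lemma IsSortedBy.oddExt_le (h : IsSortedBy f w) {k l : ℕ} (hkl : k ≤ l) (hl : l ≤ n) :
    oddExt f (bVal w k) ≤ oddExt f (bVal w l) := by
  have hmono : Monotone fun k : Fin (n + 1) => oddExt f (bVal w k) :=
    Fin.monotone_iff_le_succ.2 fun k => (sortKey_lt_sortKey.1 (h k k.2)).elim le_of_lt
      fun h => h.1.le
  exact hmono (a := ⟨k, by omega⟩) (b := ⟨l, by omega⟩) hkl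

lemma IsSortedBy.oddExt_nonneg (h : IsSortedBy f w) {k : ℕ} (hk : k ≤ n) :
    0 ≤ oddExt f (bVal w k) := by
  simpa only [bVal_zero, oddExt_zero] using h.oddExt_le (Nat.zero_le k) hk

lemma oddExt_bVal_le (hw : IsSignedPerm w) (hf : f ∈ levelFunctions n r) {k : ℕ} (hk : k ≤ n) :
    oddExt f (bVal w k) ≤ r := by
  cases k with
  | zero => rw [bVal_zero, oddExt_zero]; exact Int.natCast_nonneg r
  | succ k =>
    rw [bVal_succ w ⟨k, hk⟩]
    exact Int.le_natAbs.trans <|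
      Int.ofNat_le.2 (natAbs_oddExt_le hf ((isSignedPerm_iff.1 hw).1 ⟨k, hk⟩))

lemma IsSortedBy.exists_oddExt_eq (h : IsSortedBy f w) (hw : IsSignedPerm w)
    (hf : f ∈ levelFunctions n r) {l : ℕ} (hl : 1 ≤ l) (hlr : l ≤ r) :
    ∃ k ≤ n, oddExt f (bVal w k) = l := by
  obtain ⟨j, hj⟩ := (mem_levelFunctions.1 hf).2 l (mem_signedRange.2 (by omega))
  obtain ⟨σ, hσ⟩ := exists_perm_natAbs_eq hw
  obtain ⟨i, rfl⟩ := σ.surjective j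
  refine ⟨i + 1, i.2, ?_⟩
  rw [← oddExt_natAbs f (hσ i), ← bVal_succ w i, Int.natAbs_natCast] at hj
  rw [← hj, Int.natAbs_of_nonneg (h.oddExt_nonneg i.2)]

lemma IsSortedBy.oddExt_succ_le (h : IsSortedBy f w) (hw : IsSignedPerm w)
    (hf : f ∈ levelFunctions n r) {k : ℕ} (hk : k < n) :
    oddExt f (bVal w (k + 1)) ≤ oddExt f (bVal w k) + 1 := by
  by_contra! hskip
  obtain ⟨l, hl⟩ := Int.eq_ofNat_of_zero_le (h.oddExt_nonneg hk.le)
  have hbound := oddExt_bVal_le hw hf (k := k + 1) hk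
  obtain ⟨m, hm, hml⟩ := h.exists_oddExt_eq hw hf (l := l + 1) (by omega) (by omega)
  rcases le_or_gt m k with hmk | hkm
  · have := h.oddExt_le hmk hk.le
    omega
  · have := h.oddExt_le (k := k + 1) hkm hm
    omega

lemma IsSortedBy.oddExt_last (h : IsSortedBy f w) (hw : IsSignedPerm w)
    (hf : f ∈ levelFunctions n r) : oddExt f (bVal w n) = r := by
  refine le_antisymm (oddExt_bVal_le hw hf le_rfl) ?_
  obtain rfl | hr := Nat.eq_zero_or_pos r
  · exact h.oddExt_nonneg le_rfl
  · obtain ⟨k, hk, hkr⟩ := h.exists_oddExt_eq hw hf hr le_rfl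
    exact hkr ▸ h.oddExt_le hk le_rfl

lemma IsSortedBy.exists_encodes (h : IsSortedBy f w) (hw : IsSignedPerm w)
    (hf : f ∈ levelFunctions n r) : ∃ S ∈ powersetCard r (range n), Encodes f S w := by
  set S := (range n).filter fun k => oddExt f (bVal w k) < oddExt f (bVal w (k + 1)) with hS
  have hcount {m : ℕ} (hm : m ≤ n) : (Nat.count (· ∈ S) m : ℤ) = oddExt f (bVal w m) := by
    rw [← count_lt_succ_eq (G := fun k => oddExt f (bVal w k)) (by rw [bVal_zero, oddExt_zero])
      fun k hk => ⟨h.oddExt_le k.le_succ (by omega), h.oddExt_succ_le hw hf (by omega)⟩]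
    rw [Nat.count_eq_card_filter_range, Nat.count_eq_card_filter_range]
    congr 2
    refine filter_congr fun k hk => ?_
    rw [hS, mem_filter, mem_range, and_iff_right (by have := mem_range.1 hk; omega)]
  have henc : Encodes f S w := fun i => by rw [hcount i.2, bVal_succ]
  refine ⟨S, mem_powersetCard.2 ⟨filter_subset _ _, ?_⟩, henc⟩
  rw [← count_mem_eq_card (filter_subset _ _)]
  exact Nat.cast_injective (R := ℤ) ((hcount le_rfl).trans (h.oddExt_last hw hf))

/-- The signed permutations whose type `B` descents all belong to `S`. -/
noncomputable def boundedDescentsB (n : ℕ) (S : Finset ℕ) : Finset (Fin n → ℤ) :=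
  (signedPerms n).filter fun w => descentsB w ⊆ S

lemma mem_boundedDescentsB :
    w ∈ boundedDescentsB n S ↔ IsSignedPerm w ∧ descentsB w ⊆ S := by
  rw [boundedDescentsB, mem_filter, mem_signedPerms]

/-- Each pair `(S, w)` is encoded by exactly one level function, and vice versa. -/
lemma sum_card_boundedDescentsB {p : Finset ℕ → Prop} {q : (Fin n → ℤ) → Prop}
    [DecidablePred p] [DecidablePred q]
    (hpq : ∀ f S w, IsSignedPerm w → S ⊆ range n → Encodes f S w → (p S ↔ q f)) :
    ∑ S ∈ powersetCard r (range n) with p S, #(boundedDescentsB n S) =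
      #{f ∈ levelFunctions n r | q f} := by
  rw [← card_sigma]
  refine card_eq_of_existsUnique (R := fun x f => Encodes f x.1 x.2) ?_ fun f hf => ?_
  · rintro ⟨S, w⟩ hx
    simp only [mem_sigma, mem_filter, mem_powersetCard, mem_boundedDescentsB] at hx
    obtain ⟨⟨⟨hS, rfl⟩, hp⟩, hw, -⟩ := hx
    obtain ⟨f, henc, huniq⟩ := existsUnique_encodes hw S
    exact ⟨f, ⟨mem_filter.2 ⟨henc.mem_levelFunctions hw hS, (hpq f S w hw hS henc).1 hp⟩, henc⟩,
      fun f' h => huniq f' h.2⟩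
  · obtain ⟨hf, hq⟩ := mem_filter.1 hf
    obtain ⟨w, ⟨hw, hsorted⟩, huniq⟩ := existsUnique_isSortedBy f
    obtain ⟨S, hS, henc⟩ := hsorted.exists_encodes hw hf
    have hSn := (mem_powersetCard.1 hS).1
    refine ⟨⟨S, w⟩, ⟨mem_sigma.2 ⟨mem_filter.2 ⟨hS, (hpq f S w hw hSn henc).2 hq⟩,
      mem_boundedDescentsB.2 ⟨hw, (henc.isSortedBy_iff hw).1 hsorted⟩⟩, henc⟩, ?_⟩
    rintro ⟨S', w'⟩ ⟨hx, henc'⟩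
    simp only [mem_sigma, mem_filter, mem_powersetCard, mem_boundedDescentsB] at hx
    obtain ⟨⟨⟨hS', -⟩, -⟩, hw', hdes⟩ := hx
    obtain rfl : w' = w := huniq w' ⟨hw', (henc'.isSortedBy_iff hw').2 hdes⟩
    obtain rfl : S' = S := (henc'.subset henc hS').antisymm (henc.subset henc' hSn)
    rfl

lemma existsUnique_count_succ_eq_iff (hn : 2 ≤ n) :
    (∃! i : Fin n, Nat.count (· ∈ S) (i + 1) = Nat.count (· ∈ S) 1) ↔ 1 ∈ S := by
  have hlt : Nat.count (· ∈ S) 1 < Nat.count (· ∈ S) 2 ↔ 1 ∈ S := Nat.count_lt_count_succ_iff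
  have hmono := Nat.count_monotone (· ∈ S)
  constructor
  · intro huniq
    by_contra h1
    have h12 : Nat.count (· ∈ S) 2 = Nat.count (· ∈ S) 1 :=
      (not_lt.1 (hlt.not.2 h1)).antisymm (hmono one_le_two)
    have := huniq.unique (y₁ := ⟨0, by omega⟩) (y₂ := ⟨1, by omega⟩) rfl h12
    simp at this
  · intro h1
    refine ⟨⟨0, by omega⟩, rfl, fun i hi => Fin.ext ?_⟩
    by_contra hi0
    have := hmono (show 2 ≤ (i : ℕ) + 1 by simp only at hi0; omega)
    have := hlt.2 h1
    omega

lemma Encodes.forall_ne_zero_iff (h : Encodes f S w) (hw : IsSignedPerm w) (hn : 1 ≤ n) :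
    (∀ j, f j ≠ 0) ↔ 0 ∈ S := by
  obtain ⟨σ, hσ⟩ := h.exists_perm_natAbs_eq_count hw
  have hzero : Nat.count (· ∈ S) (0 + 1) ≠ 0 ↔ 0 ∈ S := by simp [Nat.count_succ]
  rw [σ.surjective.forall, ← hzero]
  simp only [← Int.natAbs_ne_zero, hσ]
  exact ⟨fun hne => hne ⟨0, hn⟩, fun hne i h0 => hne <|
    Nat.eq_zero_of_le_zero (h0 ▸ Nat.count_monotone _ (by omega))⟩

lemma Encodes.existsUnique_natAbs_eq_iff (h : Encodes f S w) (hw : IsSignedPerm w)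
    (hn : 2 ≤ n) : (∃! j, (f j).natAbs = if 0 ∈ S then 1 else 0) ↔ 1 ∈ S := by
  obtain ⟨σ, hσ⟩ := h.exists_perm_natAbs_eq_count hw
  have hone : Nat.count (· ∈ S) 1 = if 0 ∈ S then 1 else 0 := by simp [Nat.count_succ]
  rw [← existsUnique_count_succ_eq_iff hn, ← hone, σ.bijective.existsUnique_iff]
  simp only [hσ]

lemma sum_card_boundedDescentsB_eq_card_not_existsUnique (hn : 2 ≤ n) :
    ∑ S ∈ powersetCard r (range n) with ¬(0 ∉ S ∧ 1 ∈ S), #(boundedDescentsB n S) =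
      #{f ∈ levelFunctions n r | ¬∃! j, f j = 0} := by
  refine sum_card_boundedDescentsB fun f S w hw _ henc => not_congr ?_
  rw [← henc.existsUnique_natAbs_eq_iff hw hn]
  by_cases h0 : 0 ∈ S
  · have hne := (henc.forall_ne_zero_iff hw (by omega)).2 h0
    exact iff_of_false (fun h => h.1 h0) fun h => hne _ h.exists.choose_spec
  · simp only [h0, not_false_eq_true, true_and, if_false, Int.natAbs_eq_zero]

lemma sum_card_boundedDescentsB_eq_two_pow_mul (m s : ℕ) (hm : 1 ≤ m) :
    ∑ S ∈ powersetCard (s + 1) (range (m + 1)) with 0 ∈ S ∧ 1 ∈ S,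
      #(boundedDescentsB (m + 1) S) = 2 ^ (m + 1) * ((m + 1) * (s.factorial * Stir m s)) := by
  rw [sum_card_boundedDescentsB (q := fun f => (∀ j, f j ≠ 0) ∧ ∃! j, (f j).natAbs = 1)]
  · rw [← card_surjective_existsUnique_eq_zero m s]
    refine card_filter_eq_two_pow_mul (fun f hf j => ?_) fun ε h => ?_
    · obtain ⟨hf, hne, -⟩ := mem_filter.1 hf
      exact mem_signedRange.2 ⟨hne j, (mem_levelFunctions.1 hf).1 j⟩
    · have hne (j) : signedLift ε h j ≠ 0 :=
        (mem_signedRange.1 (signedLift_mem_signedRange ε h j)).1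
      simp only [mem_filter, signedLift_mem_levelFunctions, hne, natAbs_signedLift, ne_eq,
        not_false_eq_true, implies_true, true_and, Nat.add_eq_right, Fin.val_eq_zero_iff]
  · intro f S w hw _ henc
    rw [henc.forall_ne_zero_iff hw (by omega)]
    refine and_congr_right fun h0 => ?_
    rw [← henc.existsUnique_natAbs_eq_iff hw (by omega), if_pos h0]

end Encoding

/-! ### Type `D` descents -/

section NegFirst

variable {n r : ℕ} {w : Fin n → ℤ} {S : Finset ℕ}

/-- The type `D` descent set of `w`. -/
noncomputable def descentsD (w : Fin n → ℤ) : Finset ℕ :=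
  (range n).filter fun i => bVal w (i + 1) < if i = 0 then -bVal w 2 else bVal w i

lemma zero_mem_descentsD_iff (hn : 0 < n) : 0 ∈ descentsD w ↔ bVal w 1 < -bVal w 2 := by
  rw [descentsD, mem_filter, mem_range, if_pos rfl, zero_add, and_iff_right hn]

lemma succ_mem_descentsD_iff {k : ℕ} :
    k + 1 ∈ descentsD w ↔ k + 1 < n ∧ bVal w (k + 2) < bVal w (k + 1) := by
  simp only [descentsD, mem_filter, mem_range, if_neg k.succ_ne_zero, add_assoc, one_add_one_eq_two]

lemma mem_descentsB_iff {k : ℕ} : k ∈ descentsB w ↔ k < n ∧ bVal w (k + 1) < bVal w k := by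
  rw [descentsB, mem_filter, mem_range]

lemma succ_mem_descentsD_iff_mem_descentsB {k : ℕ} : k + 1 ∈ descentsD w ↔ k + 1 ∈ descentsB w := by
  rw [succ_mem_descentsD_iff, mem_descentsB_iff]

/-- The signed permutation `w` with the sign of its first entry changed. -/
def negFirst (w : Fin n → ℤ) (i : Fin n) : ℤ := if (i : ℕ) = 0 then -w i else w i

lemma negFirst_involutive : Function.Involutive (negFirst (n := n)) := by
  intro w
  funext i
  simp only [negFirst]
  split_ifs
  · exact neg_neg _
  · rfl

lemma bVal_negFirst (w : Fin n → ℤ) (k : ℕ) :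
    bVal (negFirst w) k = if k = 1 then -bVal w k else bVal w k := by
  simp only [bVal, negFirst]
  split_ifs <;> omega

lemma isSignedPerm_negFirst : IsSignedPerm (negFirst w) ↔ IsSignedPerm w := by
  have habs (i) : |negFirst w i| = |w i| := by
    rw [negFirst]
    split_ifs
    · exact abs_neg _
    · rfl
  simp only [IsSignedPerm, habs]

lemma isEvenSigned_negFirst (hn : 1 ≤ n) (hw : IsSignedPerm w) :
    IsEvenSigned (negFirst w) ↔ ¬IsEvenSigned w := by
  obtain ⟨m, rfl⟩ := Nat.exists_eq_add_of_le' hn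
  have h0 := (mem_signedRange.1 ((isSignedPerm_iff.1 hw).1 0)).1
  have hfirst : negFirst w 0 < 0 ↔ ¬w 0 < 0 := by
    simp only [negFirst, Fin.val_zero, if_true]
    omega
  have hrest (i : Fin m) : negFirst w i.succ = w i.succ := if_neg (by simp)
  simp only [IsEvenSigned, Fin.card_filter_univ_succ, hfirst, hrest]
  split_ifs <;> simp only [Nat.even_add_one, not_not]

/-- The image of `S` under the transposition of `0` and `1`. -/
def swapZeroOne (S : Finset ℕ) : Finset ℕ := S.map (Equiv.swap 0 1).toEmbedding

lemma mem_swapZeroOne {k : ℕ} : k ∈ swapZeroOne S ↔ Equiv.swap 0 1 k ∈ S := by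
  rw [swapZeroOne, mem_map_equiv, Equiv.symm_swap]

lemma swapZeroOne_involutive : Function.Involutive swapZeroOne := fun S => by
  ext k
  rw [mem_swapZeroOne, mem_swapZeroOne, Equiv.swap_apply_self]

lemma swapZeroOne_eq_self (h : 0 ∈ S ↔ 1 ∈ S) : swapZeroOne S = S := by
  ext k
  rw [mem_swapZeroOne]
  rcases k with _ | _ | k
  · rw [Equiv.swap_apply_left, h]
  · rw [Equiv.swap_apply_right, h]
  · rw [Equiv.swap_apply_of_ne_of_ne (by omega) (by omega)]

lemma swapZeroOne_mem_powersetCard (hn : 2 ≤ n) :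
    swapZeroOne S ∈ powersetCard r (range n) ↔ S ∈ powersetCard r (range n) := by
  have hrange : swapZeroOne (range n) = range n := swapZeroOne_eq_self (by
    simp only [mem_range]
    omega)
  rw [mem_powersetCard, mem_powersetCard]
  nth_rw 1 [← hrange]
  simp only [swapZeroOne, map_subset_map, card_map]

lemma descentsD_negFirst (hn : 2 ≤ n) (w : Fin n → ℤ) :
    descentsD (negFirst w) = swapZeroOne (descentsD w) := by
  have hone : bVal (negFirst w) 1 = -bVal w 1 := by rw [bVal_negFirst, if_pos rfl]
  have hrest {k} (hk : k ≠ 1) : bVal (negFirst w) k = bVal w k := by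
    rw [bVal_negFirst, if_neg hk]
  have hzero_mem {w : Fin n → ℤ} : 0 ∈ descentsD w ↔ bVal w 1 < -bVal w 2 :=
    zero_mem_descentsD_iff (by omega)
  have hone_mem {w : Fin n → ℤ} : 1 ∈ descentsD w ↔ bVal w 2 < bVal w 1 :=
    succ_mem_descentsD_iff.trans (and_iff_right hn)
  ext k
  rw [mem_swapZeroOne]
  rcases k with _ | _ | k
  · rw [Equiv.swap_apply_left, hzero_mem, hone_mem, hone, hrest (by omega), neg_lt_neg_iff]
  · rw [zero_add, Equiv.swap_apply_right, hzero_mem, hone_mem, hone, hrest (by omega), lt_neg]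
  · rw [Equiv.swap_apply_of_ne_of_ne (by omega) (by omega), succ_mem_descentsD_iff,
      succ_mem_descentsD_iff, hrest (by omega), hrest (by omega)]

lemma two_mul_EulD (hn : 2 ≤ n) (k : ℕ) :
    2 * EulD n k = #{w ∈ signedPerms n | #(descentsD w) = k} := by
  have hEulD : EulD n k = #{w ∈ signedPerms n | #(descentsD w) = k ∧ IsEvenSigned w} := by
    rw [EulD, Nat.subtype_card]
    intro w
    rw [mem_filter, mem_signedPerms, and_comm (a := #_ = k)]
    rfl
  have hodd : #{w ∈ signedPerms n | #(descentsD w) = k ∧ IsEvenSigned w} =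
      #{w ∈ signedPerms n | #(descentsD w) = k ∧ ¬IsEvenSigned w} := by
    refine card_bijective negFirst negFirst_involutive.bijective fun w => ?_
    simp only [mem_filter, mem_signedPerms, isSignedPerm_negFirst, descentsD_negFirst hn,
      swapZeroOne, card_map]
    refine and_congr_right fun hw => and_congr_right fun _ => ?_
    rw [isEvenSigned_negFirst (by omega) hw, not_not]
  rw [← card_filter_add_card_filter_not IsEvenSigned, filter_filter, filter_filter, ← hodd, hEulD,
    two_mul]

/-- The signed permutations whose type `D` descents all belong to `S`. -/
noncomputable def boundedDescentsD (n : ℕ) (S : Finset ℕ) : Finset (Fin n → ℤ) :=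
  (signedPerms n).filter fun w => descentsD w ⊆ S

lemma mem_boundedDescentsD :
    w ∈ boundedDescentsD n S ↔ IsSignedPerm w ∧ descentsD w ⊆ S := by
  rw [boundedDescentsD, mem_filter, mem_signedPerms]

lemma card_filter_subset_powersetCard_range {D : Finset ℕ} (hD : D ⊆ range n) (r : ℕ) :
    #{S ∈ powersetCard r (range n) | D ⊆ S} =
      ∑ k ∈ range (r + 1), if #D = k then (n - k).choose (r - k) else 0 := by
  rw [sum_ite_eq]
  split_ifs with hr
  · rw [card_filter_powersetCard_subset _ _ _ hD (Nat.lt_succ_iff.1 (mem_range.1 hr)), card_range]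
  · refine card_eq_zero.2 (filter_eq_empty_iff.2 fun S hS hDS => hr ?_)
    rw [mem_range, Nat.lt_succ_iff, ← (mem_powersetCard.1 hS).2]
    exact card_le_card hDS

lemma two_mul_sum_EulD_mul_choose (hn : 2 ≤ n) (r : ℕ) :
    2 * ∑ k ∈ range (r + 1), EulD n k * (n - k).choose (r - k) =
      ∑ S ∈ powersetCard r (range n), #(boundedDescentsD n S) := by
  calc 2 * ∑ k ∈ range (r + 1), EulD n k * (n - k).choose (r - k)
      = ∑ k ∈ range (r + 1), ∑ w ∈ signedPerms n,
          if #(descentsD w) = k then (n - k).choose (r - k) else 0 := by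
        rw [mul_sum]
        refine sum_congr rfl fun k _ => ?_
        rw [← mul_assoc, two_mul_EulD hn, ← sum_filter, sum_const, smul_eq_mul]
    _ = ∑ w ∈ signedPerms n, #{S ∈ powersetCard r (range n) | descentsD w ⊆ S} := by
        rw [sum_comm]
        exact sum_congr rfl fun w _ =>
          (card_filter_subset_powersetCard_range (filter_subset _ _) r).symm
    _ = ∑ S ∈ powersetCard r (range n), #(boundedDescentsD n S) :=
        sum_card_bipartiteAbove_eq_sum_card_bipartiteBelow fun w S => descentsD w ⊆ S

lemma boundedDescentsD_eq_boundedDescentsB (h0 : 0 ∈ S) :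
    boundedDescentsD n S = boundedDescentsB n S := by
  ext w
  rw [mem_boundedDescentsD, mem_boundedDescentsB]
  refine and_congr_right fun _ => forall_congr' fun k => ?_
  cases k with
  | zero => exact iff_of_true (fun _ => h0) fun _ => h0
  | succ k => rw [succ_mem_descentsD_iff_mem_descentsB]

lemma negFirst_mem_boundedDescentsD (hn : 2 ≤ n) :
    negFirst w ∈ boundedDescentsD n (swapZeroOne S) ↔ w ∈ boundedDescentsD n S := by
  rw [mem_boundedDescentsD, mem_boundedDescentsD, isSignedPerm_negFirst, descentsD_negFirst hn,
    swapZeroOne, swapZeroOne, map_subset_map]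

lemma card_boundedDescentsD_swapZeroOne (hn : 2 ≤ n) (S : Finset ℕ) :
    #(boundedDescentsD n (swapZeroOne S)) = #(boundedDescentsD n S) :=
  .symm <| card_bijective negFirst negFirst_involutive.bijective fun _ =>
    (negFirst_mem_boundedDescentsD hn).symm

lemma mem_boundedDescentsB_iff_pos (hn : 2 ≤ n) (h0 : 0 ∉ S) (h1 : 1 ∉ S) :
    w ∈ boundedDescentsB n S ↔ w ∈ boundedDescentsD n S ∧ 0 < bVal w 1 := by
  rw [mem_boundedDescentsB, mem_boundedDescentsD, and_assoc]
  refine and_congr_right fun hw => ⟨fun hB => ?_, fun ⟨hD, hpos⟩ k hk => ?_⟩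
  · have hasc := (descentsB_subset_iff hw).1 hB
    have hpos : 0 < bVal w 1 := by simpa only [bVal_zero] using hasc 0 (by omega) h0
    refine ⟨fun k hk => ?_, hpos⟩
    cases k with
    | zero =>
      have := (zero_mem_descentsD_iff (by omega)).1 hk
      have : bVal w 1 < bVal w 2 := hasc 1 (by omega) h1
      omega
    | succ k => exact hB (succ_mem_descentsD_iff_mem_descentsB.1 hk)
  · cases k with
    | zero =>
      have := mem_descentsB_iff.1 hk
      rw [bVal_zero] at this
      exact absurd this.2 hpos.not_gt
    | succ k => exact hD (succ_mem_descentsD_iff_mem_descentsB.2 hk)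

lemma card_boundedDescentsD_of_notMem (hn : 2 ≤ n) (h0 : 0 ∉ S) (h1 : 1 ∉ S) :
    #(boundedDescentsD n S) = 2 * #(boundedDescentsB n S) := by
  have hpos : {w ∈ boundedDescentsD n S | 0 < bVal w 1} = boundedDescentsB n S := by
    ext w
    rw [mem_filter, mem_boundedDescentsB_iff_pos hn h0 h1]
  have hneg : #{w ∈ boundedDescentsD n S | 0 < bVal w 1} =
      #{w ∈ boundedDescentsD n S | ¬0 < bVal w 1} := by
    refine card_bijective negFirst negFirst_involutive.bijective fun w => ?_
    rw [mem_filter, mem_filter, bVal_negFirst, if_pos rfl,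
      ← negFirst_mem_boundedDescentsD hn, swapZeroOne_eq_self (iff_of_false h0 h1)]
    refine and_congr_right fun hw => ?_
    have := bVal_ne_bVal_succ (isSignedPerm_negFirst.1 (mem_boundedDescentsD.1 hw).1)
      (k := 0) (by omega)
    rw [bVal_zero, zero_add] at this
    omega
  rw [← card_filter_add_card_filter_not fun w => 0 < bVal w 1, ← hneg, hpos, two_mul]

lemma sum_card_boundedDescentsD_zero_notMem_one_mem (hn : 2 ≤ n) (r : ℕ) :
    ∑ S ∈ powersetCard r (range n) with 0 ∉ S ∧ 1 ∈ S, #(boundedDescentsD n S) =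
      ∑ S ∈ powersetCard r (range n) with 0 ∈ S ∧ 1 ∉ S, #(boundedDescentsB n S) := by
  refine sum_bijective swapZeroOne swapZeroOne_involutive.bijective (fun S => ?_) fun S hS => ?_
  · rw [mem_filter, mem_filter, swapZeroOne_mem_powersetCard hn, mem_swapZeroOne, mem_swapZeroOne,
      Equiv.swap_apply_left, Equiv.swap_apply_right, and_comm (a := 0 ∉ S)]
  · have h0 : 0 ∈ swapZeroOne S := by
      rw [mem_swapZeroOne, Equiv.swap_apply_left]
      exact (mem_filter.1 hS).2.2
    rw [← boundedDescentsD_eq_boundedDescentsB h0, card_boundedDescentsD_swapZeroOne hn]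

/-- The correction term `0, 1 ∈ S` sits on the left so that no subtraction occurs. -/
lemma sum_card_boundedDescentsD_add (hn : 2 ≤ n) (r : ℕ) :
    ∑ S ∈ powersetCard r (range n), #(boundedDescentsD n S) +
        ∑ S ∈ powersetCard r (range n) with 0 ∈ S ∧ 1 ∈ S, #(boundedDescentsB n S) =
      2 * ∑ S ∈ powersetCard r (range n) with ¬(0 ∉ S ∧ 1 ∈ S), #(boundedDescentsB n S) := by
  have hswap := sum_card_boundedDescentsD_zero_notMem_one_mem hn r
  rw [← sum_filter_add_sum_filter_not _ fun S => 0 ∉ S ∧ 1 ∈ S, hswap]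
  simp only [sum_filter, mul_sum, ← sum_add_distrib]
  refine sum_congr rfl fun S _ => ?_
  by_cases h0 : 0 ∈ S
  · rw [boundedDescentsD_eq_boundedDescentsB h0]
    by_cases h1 : 1 ∈ S <;> simp [h0, h1, two_mul]
  · by_cases h1 : 1 ∈ S
    · simp [h0, h1]
    · simp [h0, h1, card_boundedDescentsD_of_notMem hn h0 h1]

end NegFirst

/-- `2^r · r! · S_D(n,r) = Σ_{k=0}^{r} A_D(n,k) · C(n−k, r−k) + n · 2^{n−1} · (r−1)! · S(n−1, r−1)`. -/
theorem stirling_eulerian_typeD (n r : ℕ) (hn : 2 ≤ n) (hr1 : 1 ≤ r) (hrn : r ≤ n) :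
    2 ^ r * Nat.factorial r * SD n r =
      (∑ k ∈ Finset.range (r + 1), EulD n k * Nat.choose (n - k) (r - k)) +
        n * 2 ^ (n - 1) * Nat.factorial (r - 1) * Stir (n - 1) (r - 1) := by
  obtain ⟨m, rfl⟩ := Nat.exists_eq_add_of_le' (show 1 ≤ n by omega)
  obtain ⟨s, rfl⟩ := Nat.exists_eq_add_of_le' hr1
  have hSD := two_pow_mul_factorial_mul_SD (m + 1) (s + 1)
  have hEulD := two_mul_sum_EulD_mul_choose hn (s + 1)
  have hdescents := sum_card_boundedDescentsD_add hn (s + 1)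
  have hStir := sum_card_boundedDescentsB_eq_two_pow_mul m s (by omega)
  rw [← sum_card_boundedDescentsB_eq_card_not_existsUnique hn] at hSD
  rw [← hEulD, hStir, ← hSD, pow_succ] at hdescents
  simp only [Nat.add_sub_cancel]
  linarith
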